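/- Let Ω ⊂ ℝ^d be a bounded open set with Lipschitz boundary, let p > d−1, and let W : Ω×ℝ^{m×d} → [0,+∞) satisfy Assumption 1 and additionally x ↦ W(x,ξ) ∈ L¹(Ω) for every ξ ∈ ℝ^{m×d}. Let g ∈ W^{1,∞}(Ω)^m. Then for every u ∈ g + W^{1,p}_0(Ω)^m there exists a sequence u_n ∈ g + C_c^∞(Ω)^m such that u_n → u strongly in W^{1,p}(Ω)^m and ∫_Ω W(x, Du_n) dx → ∫_Ω W(x, Du) dx. In particular, inf over g + W^{1,p}_0(Ω)^m of ∫_Ω W(x, Du) dx equals the inf over g + C_c^∞(Ω)^m. -/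

import Mathlib

open MeasureTheory Metric Set Filter
open scoped ENNReal Topology NNReal RealInnerProductSpace

noncomputable section

/-- `ℝ^d` as a Euclidean space. -/
abbrev Euc (d : ℕ) := EuclideanSpace ℝ (Fin d)

/-- The space `ℝ^{m×d}` of `m×d` matrices. -/
abbrev Mat (m d : ℕ) := Fin m → Fin d → ℝ

/-- Frobenius (Euclidean) norm of an `m×d` matrix. -/
def frobNorm {m d : ℕ} (ξ : Mat m d) : ℝ :=
  Real.sqrt (∑ i, ∑ j, ξ i j ^ 2)

/-- `φ ∈ C_c^∞(Ω)^m`: a smooth function with compact support contained in `Ω`. -/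
def IsCcSmooth {d m : ℕ} (Ω : Set (Euc d)) (φ : Euc d → Euc m) : Prop :=
  ContDiff ℝ (⊤ : ℕ∞) φ ∧ HasCompactSupport φ ∧ tsupport φ ⊆ Ω

/-- The (classical) Jacobian matrix of a differentiable map. -/
def smoothJac {d m : ℕ} (φ : Euc d → Euc m) (x : Euc d) : Mat m d :=
  fun i j => fderiv ℝ φ x (EuclideanSpace.single j 1) i

/-- `Du` is the weak Jacobian of `u` on `Ω` (integration by parts against test functions). -/
def IsWeakJacobianOn {d m : ℕ} (Ω : Set (Euc d)) (u : Euc d → Euc m)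
    (Du : Euc d → Mat m d) : Prop :=
  ∀ φ : Euc d → ℝ, ContDiff ℝ (⊤ : ℕ∞) φ → HasCompactSupport φ → tsupport φ ⊆ Ω →
    ∀ (i : Fin m) (j : Fin d),
      ∫ x in Ω, u x i * fderiv ℝ φ x (EuclideanSpace.single j 1) =
        - ∫ x in Ω, Du x i j * φ x

/-- `u ∈ W^{1,p}(Ω)^m` with weak Jacobian `Du`. -/
def MemW1p {d m : ℕ} (Ω : Set (Euc d)) (p : ℝ≥0∞) (u : Euc d → Euc m)
    (Du : Euc d → Mat m d) : Prop :=
  MemLp u p (volume.restrict Ω) ∧ MemLp Du p (volume.restrict Ω) ∧ IsWeakJacobianOn Ω u Du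

/-- Strong convergence `uₙ → v` in `W^{1,p}(Ω)^m` (together with the Jacobians). -/
def TendstoW1p {d m : ℕ} (Ω : Set (Euc d)) (p : ℝ≥0∞)
    (u : ℕ → Euc d → Euc m) (Du : ℕ → Euc d → Mat m d)
    (v : Euc d → Euc m) (Dv : Euc d → Mat m d) : Prop :=
  Tendsto (fun n => eLpNorm (u n - v) p (volume.restrict Ω)) atTop (𝓝 0) ∧
  Tendsto (fun n => eLpNorm (Du n - Dv) p (volume.restrict Ω)) atTop (𝓝 0)

/-- `v ∈ W_0^{1,p}(Ω)^m`, i.e. `v ∈ W^{1,p}` and `v` is a `W^{1,p}`-limit of functions in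
`C_c^∞(Ω)^m`. -/
def MemW1p0 {d m : ℕ} (Ω : Set (Euc d)) (p : ℝ≥0∞) (v : Euc d → Euc m)
    (Dv : Euc d → Mat m d) : Prop :=
  MemW1p Ω p v Dv ∧
  ∃ w : ℕ → Euc d → Euc m, (∀ n, IsCcSmooth Ω (w n)) ∧
    TendstoW1p Ω p w (fun n => smoothJac (w n)) v Dv

/-- `Ω` has Lipschitz boundary: near each boundary point, `Ω` is the subgraph of a Lipschitz
function over a hyperplane. -/
def HasLipschitzBoundary {d : ℕ} (Ω : Set (Euc d)) : Prop :=
  ∀ x ∈ frontier Ω, ∃ (ν : Euc d) (r L : ℝ) (ψ : Euc d → ℝ),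
    ‖ν‖ = 1 ∧ 0 < r ∧ 0 ≤ L ∧ LipschitzWith (Real.toNNReal L) ψ ∧
    ∀ y ∈ ball x r, (y ∈ Ω ↔ ⟪y, ν⟫ < ψ (y - ⟪y, ν⟫ • ν))

/-- Convexity of a `[0,+∞]`-valued function. -/
def ConvexENNReal {m d : ℕ} (f : Mat m d → ℝ≥0∞) : Prop :=
  ∀ ξ η : Mat m d, ∀ t : ℝ, 0 ≤ t → t ≤ 1 →
    f (t • ξ + (1 - t) • η) ≤ ENNReal.ofReal t * f ξ + ENNReal.ofReal (1 - t) * f η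

/-- The convex biconjugate `f**` of a `[0,+∞]`-valued function: the supremum of all affine
minorants of `f`. -/
def biconj {m d : ℕ} (f : Mat m d → ℝ≥0∞) (ξ : Mat m d) : ℝ≥0∞ :=
  ⨆ (L : Mat m d →ₗ[ℝ] ℝ) (c : ℝ) (_ : ∀ η, ENNReal.ofReal (L η + c) ≤ f η),
    ENNReal.ofReal (L ξ + c)

/-- Assumption (a4): the local stability estimate
`W(x,ξ) ≤ C_M (ess inf_{y ∈ B̄_δ(x) ∩ Ω} W(y,·))**(ξ) + α_M(x)` for `|ξ| ≤ M δ^{-d/p}`. -/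
def StabilityEstimate {d m : ℕ} (Ω : Set (Euc d)) (p : ℝ)
    (W : Euc d → Mat m d → ℝ≥0∞) : Prop :=
  ∀ M : ℝ, 1 < M → ∃ (CM δ₀ : ℝ) (αM : Euc d → ℝ≥0∞),
    0 < CM ∧ 0 < δ₀ ∧ (∫⁻ x in Ω, αM x) < ⊤ ∧
    ∀ δ : ℝ, 0 < δ → δ < δ₀ → ∀ x ∈ Ω, ∀ ξ : Mat m d,
      frobNorm ξ ≤ M * δ ^ (-(d : ℝ) / p) →
      W x ξ ≤ ENNReal.ofReal CM *
          biconj (fun η => essInf (fun y => W y η) (volume.restrict (closedBall x δ ∩ Ω))) ξ +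
        αM x

/-- Assumption 1 of the paper (items (a1)–(a4)) for the integrand `W` on `Ω`, with lower
growth exponent `p`. -/
def Assumption1 {d m : ℕ} (Ω : Set (Euc d)) (p : ℝ) (W : Euc d → Mat m d → ℝ≥0∞) : Prop :=
  Measurable (Function.uncurry W) ∧
  (∀ᵐ x ∂volume.restrict Ω, ConvexENNReal (W x) ∧ LowerSemicontinuous (W x)) ∧
  (∀ᵐ x ∂volume.restrict Ω, ∀ ξ, ENNReal.ofReal (frobNorm ξ ^ p) ≤ W x ξ) ∧
  ((p ≤ (d : ℝ) - 1 →
      ∃ (C q : ℝ) (α : Euc d → ℝ≥0∞), 0 < C ∧ p < q ∧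
        (p < (d : ℝ) - 1 → q ≤ ((d : ℝ) - 1) * p / ((d : ℝ) - 1 - p)) ∧
        (∫⁻ x in Ω, α x) < ⊤ ∧
        ∀ᵐ x ∂volume.restrict Ω, ∀ ξ,
          W x ξ ≤ ENNReal.ofReal (C * frobNorm ξ ^ q) + α x) ∧
    ((d : ℝ) - 1 < p →
      ∃ θ : ℝ, 0 < θ ∧
        (∫⁻ x in Ω, ⨆ ξ ∈ {ξ : Mat m d | frobNorm ξ ≤ θ}, W x ξ) < ⊤)) ∧
  StabilityEstimate Ω p W


/-! ### Approximating kernels -/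

/-- A sequence of Markov kernels concentrating near the diagonal, dominated by averages over
small balls. -/
structure KerApprox {d : ℕ} (κ : ℕ → ProbabilityTheory.Kernel (Euc d) (Euc d)) (δ : ℕ → ℝ)
    (C : ℝ≥0∞) : Prop where
  C_ne : C ≠ ⊤
  pos : ∀ n, 0 < δ n
  lim : Tendsto δ atTop (𝓝 0)
  prob : ∀ n x, IsProbabilityMeasure (κ n x)
  le : ∀ n x, κ n x ≤ (C / volume (closedBall (0 : Euc d) (δ n))) •
    volume.restrict (closedBall x (δ n))

lemma vol_cb {d : ℕ} (x : Euc d) (r : ℝ) :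
    volume (closedBall x r) = volume (closedBall (0 : Euc d) r) :=
  Measure.addHaar_closedBall_center volume x r

namespace KerApprox
variable {d : ℕ} {κ : ℕ → ProbabilityTheory.Kernel (Euc d) (Euc d)} {δ : ℕ → ℝ} {C : ℝ≥0∞}

lemma lint_le (h : KerApprox κ δ C) (n : ℕ) (x : Euc d) (f : Euc d → ℝ≥0∞) :
    ∫⁻ y, f y ∂(κ n x) ≤ C / volume (closedBall (0 : Euc d) (δ n)) *
      ∫⁻ y in closedBall x (δ n), f y := by
  refine (lintegral_mono' (h.le n x) le_rfl).trans ?_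
  rw [lintegral_smul_measure]; rfl

lemma cb_pos (h : KerApprox κ δ C) (n : ℕ) : volume (closedBall (0 : Euc d) (δ n)) ≠ 0 :=
  (measure_closedBall_pos volume _ (h.pos n)).ne'

lemma cb_fin (n : ℕ) : volume (closedBall (0 : Euc d) (δ n)) ≠ ⊤ :=
  measure_closedBall_lt_top.ne

lemma ac (h : KerApprox κ δ C) (n : ℕ) (x : Euc d) : κ n x ≪ volume := by
  refine Measure.AbsolutelyContinuous.trans (Measure.absolutelyContinuous_of_le (h.le n x)) ?_
  exact (Measure.smul_absolutelyContinuous).trans Measure.restrict_le_self.absolutelyContinuous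

lemma integrable (h : KerApprox κ δ C) {F : Type*} [NormedAddCommGroup F]
    (n : ℕ) (x : Euc d) {f : Euc d → F} (hf : Integrable f) : Integrable f (κ n x) := by
  refine Integrable.mono_measure ?_ (h.le n x)
  refine Integrable.smul_measure hf.restrict ?_
  exact (ENNReal.div_lt_top h.C_ne (h.cb_pos n)).ne

lemma tendsto_ae (h : KerApprox κ δ C) {F : Type*} [NormedAddCommGroup F] [NormedSpace ℝ F]
    [CompleteSpace F] {f : Euc d → F} (hf : Integrable f) :
    ∀ᵐ x, Tendsto (fun n => ∫ y, f y ∂(κ n x)) atTop (𝓝 (f x)) := by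
  have hδ : Tendsto δ atTop (𝓝[>] 0) := by
    rw [tendsto_nhdsWithin_iff]
    exact ⟨h.lim, Eventually.of_forall h.pos⟩
  filter_upwards [(Besicovitch.vitaliFamily (volume : Measure (Euc d))).ae_tendsto_lintegral_enorm_sub_div
    hf.locallyIntegrable] with x hx
  have h1 := (hx.comp (Besicovitch.tendsto_filterAt volume x)).comp hδ
  have h2 := ENNReal.Tendsto.const_mul (a := C) h1 (Or.inr h.C_ne)
  rw [mul_zero] at h2
  rw [tendsto_iff_edist_tendsto_0]
  refine tendsto_of_tendsto_of_tendsto_of_le_of_le tendsto_const_nhds h2 (fun _ => zero_le) ?_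
  intro n
  have := h.prob n x
  simp only [Function.comp_apply]
  have e : (∫ y, f y ∂(κ n x)) - f x = ∫ y, (f y - f x) ∂(κ n x) := by
    rw [integral_sub (h.integrable n x hf) (integrable_const _)]; simp
  rw [edist_eq_enorm_sub, e]
  refine (enorm_integral_le_lintegral_enorm _).trans ((h.lint_le n x _).trans ?_)
  rw [vol_cb x, div_eq_mul_inv, div_eq_mul_inv, mul_assoc]
  gcongr C * ?_
  rw [mul_comm]

lemma lint_lint_le (h : KerApprox κ δ C) (n : ℕ) {f : Euc d → ℝ≥0∞} (hf : Measurable f) :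
    ∫⁻ x, ∫⁻ y, f y ∂(κ n x) ≤ C * ∫⁻ y, f y := by
  set V := volume (closedBall (0 : Euc d) (δ n)) with hV
  have hm : Measurable (fun z : Euc d × Euc d =>
      (closedBall z.1 (δ n)).indicator f z.2) := by
    have : (fun z : Euc d × Euc d => (closedBall z.1 (δ n)).indicator f z.2) =
        {z : Euc d × Euc d | dist z.2 z.1 ≤ δ n}.indicator (fun z => f z.2) := by
      ext z; simp [indicator, mem_closedBall]
    rw [this]
    refine (hf.comp measurable_snd).indicator ?_
    exact (isClosed_le (continuous_snd.dist continuous_fst) continuous_const).measurableSet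
  calc ∫⁻ x, ∫⁻ y, f y ∂(κ n x)
      ≤ ∫⁻ x, C / V * ∫⁻ y, (closedBall x (δ n)).indicator f y := by
        refine lintegral_mono fun x => (h.lint_le n x f).trans ?_
        rw [lintegral_indicator isClosed_closedBall.measurableSet]
    _ = C / V * ∫⁻ x, ∫⁻ y, (closedBall x (δ n)).indicator f y := by
        rw [lintegral_const_mul]
        exact hm.lintegral_prod_right'
    _ = C / V * ∫⁻ y, ∫⁻ x, (closedBall x (δ n)).indicator f y := by
        rw [lintegral_lintegral_swap hm.aemeasurable]
    _ = C / V * ∫⁻ y, V * f y := by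
        congr 1
        refine lintegral_congr fun y => ?_
        have : (fun x => (closedBall x (δ n)).indicator f y) =
            (closedBall y (δ n)).indicator (fun _ => f y) := by
          ext x; simp [indicator, mem_closedBall, dist_comm]
        rw [this, lintegral_indicator isClosed_closedBall.measurableSet, setLIntegral_const, vol_cb,
          mul_comm]
    _ = C * ∫⁻ y, f y := by
        rw [lintegral_const_mul _ hf, ← mul_assoc, ENNReal.div_mul_cancel (h.cb_pos n) (cb_fin n)]

lemma lint_lint_le' (h : KerApprox κ δ C) (n : ℕ) {f : Euc d → ℝ≥0∞} (hf : AEMeasurable f) :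
    ∫⁻ x, ∫⁻ y, f y ∂(κ n x) ≤ C * ∫⁻ y, f y := by
  have e1 : ∀ x, ∫⁻ y, f y ∂(κ n x) = ∫⁻ y, hf.mk f y ∂(κ n x) := fun x =>
    lintegral_congr_ae ((h.ac n x).ae_eq hf.ae_eq_mk)
  simp_rw [e1]
  rw [lintegral_congr_ae hf.ae_eq_mk]
  exact h.lint_lint_le n hf.measurable_mk

lemma meas_lint (h : KerApprox κ δ C) (n : ℕ) {f : Euc d → ℝ≥0∞} (hf : AEMeasurable f) :
    Measurable (fun x => ∫⁻ y, f y ∂(κ n x)) := by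
  have e1 : ∀ x, ∫⁻ y, f y ∂(κ n x) = ∫⁻ y, hf.mk f y ∂(κ n x) := fun x =>
    lintegral_congr_ae ((h.ac n x).ae_eq hf.ae_eq_mk)
  simp_rw [e1]
  exact hf.measurable_mk.lintegral_kernel

lemma meas_int (h : KerApprox κ δ C) (n : ℕ) {F : Type*} [NormedAddCommGroup F] [NormedSpace ℝ F]
    {f : Euc d → F} (hf : AEStronglyMeasurable f) :
    StronglyMeasurable (fun x => ∫ y, f y ∂(κ n x)) := by
  have e1 : ∀ x, ∫ y, f y ∂(κ n x) = ∫ y, hf.mk f y ∂(κ n x) := fun x =>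
    integral_congr_ae ((h.ac n x).ae_eq hf.ae_eq_mk)
  simp_rw [e1]
  exact hf.stronglyMeasurable_mk.integral_kernel

end KerApprox

/-- Generalized dominated convergence. -/
lemma dct_gen {α : Type*} [MeasurableSpace α] {μ : Measure α} {h : ℕ → α → ℝ≥0∞}
    {h' G : α → ℝ≥0∞} {e : ℕ → α → ℝ≥0∞}
    (hm : ∀ n, AEMeasurable (h n) μ) (hGm : AEMeasurable G μ) (hG : ∫⁻ x, G x ∂μ ≠ ⊤)
    (he : Tendsto (fun n => ∫⁻ x, e n x ∂μ) atTop (𝓝 0))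
    (he' : ∀ᵐ x ∂μ, Tendsto (fun n => e n x) atTop (𝓝 0))
    (hle : ∀ᶠ n in atTop, ∀ᵐ x ∂μ, h n x ≤ G x + e n x)
    (hlim : ∀ᵐ x ∂μ, Tendsto (fun n => h n x) atTop (𝓝 (h' x))) :
    Tendsto (fun n => ∫⁻ x, h n x ∂μ) atTop (𝓝 (∫⁻ x, h' x ∂μ)) := by
  have hle2 : ∀ᵐ x ∂μ, h' x ≤ G x := by
    obtain ⟨N, hN⟩ := eventually_atTop.1 hle
    have hN' : ∀ᵐ x ∂μ, ∀ n, N ≤ n → h n x ≤ G x + e n x := by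
      rw [ae_all_iff]; intro n
      by_cases hn : N ≤ n
      · filter_upwards [hN n hn] with x hx _ using hx
      · exact Eventually.of_forall fun x h => absurd h hn
    filter_upwards [hN', he', hlim] with x h1 h2 h3
    have h4 : Tendsto (fun n => G x + e n x) atTop (𝓝 (G x + 0)) := tendsto_const_nhds.add h2
    rw [add_zero] at h4
    exact le_of_tendsto_of_tendsto h3 h4 (eventually_atTop.2 ⟨N, fun n hn => h1 n hn⟩)
  have hmin : Tendsto (fun n => ∫⁻ x, min (h n x) (G x) ∂μ) atTop (𝓝 (∫⁻ x, h' x ∂μ)) := by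
    refine tendsto_lintegral_of_dominated_convergence' G (fun n => (hm n).min hGm)
      (fun n => Eventually.of_forall fun x => min_le_right _ _) hG ?_
    filter_upwards [hle2, hlim] with x h1 h2
    have := h2.min (tendsto_const_nhds (x := G x))
    rwa [min_eq_left h1] at this
  have hup := hmin.add he
  rw [add_zero] at hup
  refine tendsto_of_tendsto_of_tendsto_of_le_of_le' hmin hup
    (Eventually.of_forall fun n => lintegral_mono fun x => min_le_left _ _) ?_
  filter_upwards [hle] with n hn
  rw [← lintegral_add_left' ((hm n).min hGm)]
  refine lintegral_mono_ae ?_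
  filter_upwards [hn] with x hx
  rcases le_total (h n x) (G x) with h1 | h1
  · rw [min_eq_left h1]; exact le_self_add
  · rw [min_eq_right h1]; exact hx

namespace KerApprox
variable {d : ℕ} {κ : ℕ → ProbabilityTheory.Kernel (Euc d) (Euc d)} {δ : ℕ → ℝ} {C : ℝ≥0∞}

lemma tendsto_L1_cc (h : KerApprox κ δ C) {F : Type*} [NormedAddCommGroup F] [NormedSpace ℝ F]
    [CompleteSpace F] {f : Euc d → F} (hf : Integrable f) (hfs : HasCompactSupport f)
    (hfc : Continuous f) :
    Tendsto (fun n => ∫⁻ x, ‖(∫ y, f y ∂(κ n x)) - f x‖ₑ) atTop (𝓝 0) := by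
  obtain ⟨B, hB⟩ := hfs.exists_bound_of_continuous hfc
  obtain ⟨R, hR⟩ := hfs.isCompact.isBounded.subset_closedBall (0 : Euc d)
  have hz : ∀ y, y ∉ closedBall (0 : Euc d) R → f y = 0 := fun y hy =>
    image_eq_zero_of_notMem_tsupport fun h' => hy (hR h')
  have hBe : ∀ x, ‖f x‖ₑ ≤ ENNReal.ofReal B := fun x => by
    rw [← ofReal_norm]; exact ENNReal.ofReal_le_ofReal (hB x)
  have : Tendsto (fun n => ∫⁻ x, ‖(∫ y, f y ∂(κ n x)) - f x‖ₑ) atTop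
      (𝓝 (∫⁻ x : Euc d, (fun _ => (0 : ℝ≥0∞)) x)) := by
    refine dct_gen (G := (closedBall (0 : Euc d) (R + 1)).indicator
      (fun _ => ENNReal.ofReal B + ENNReal.ofReal B)) (e := fun _ _ => 0) ?_ ?_ ?_ ?_ ?_ ?_ ?_
    · intro n
      exact ((h.meas_int n hf.1).aestronglyMeasurable.sub hf.1).enorm
    · exact (measurable_const.indicator isClosed_closedBall.measurableSet).aemeasurable
    · rw [lintegral_indicator isClosed_closedBall.measurableSet, setLIntegral_const]
      exact ENNReal.mul_ne_top (by simp) measure_closedBall_lt_top.ne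
    · simp
    · simp
    · filter_upwards [h.lim.eventually (gt_mem_nhds (zero_lt_one))] with n hn
      refine Eventually.of_forall fun x => ?_
      simp only [add_zero]
      have := h.prob n x
      by_cases hx : x ∈ closedBall (0 : Euc d) (R + 1)
      · rw [indicator_of_mem hx]
        refine enorm_sub_le.trans (add_le_add ?_ (hBe x))
        refine (enorm_integral_le_lintegral_enorm _).trans ((lintegral_mono hBe).trans ?_)
        simp
      · have hx2 : f x = 0 := hz x fun h' => hx (closedBall_subset_closedBall (by linarith) h')
        have : ∫ y, f y ∂(κ n x) = 0 := by
          have h0 : ‖∫ y, f y ∂(κ n x)‖ₑ ≤ 0 := by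
            refine (enorm_integral_le_lintegral_enorm _).trans ((h.lint_le n x _).trans ?_)
            rw [setLIntegral_congr_fun (g := fun _ => 0) isClosed_closedBall.measurableSet]
            · simp
            · intro y hy
              have : f y = 0 := by
                refine hz y fun h' => hx ?_
                rw [mem_closedBall] at *
                have := dist_triangle x y 0
                rw [dist_comm x y] at this
                linarith
              simp [this]
          simpa using h0
        rw [this, hx2]; simp
    · filter_upwards [h.tendsto_ae hf] with x hx
      rw [tendsto_iff_edist_tendsto_0] at hx
      simpa only [edist_eq_enorm_sub] using hx
  simpa using this

lemma tendsto_L1 (h : KerApprox κ δ C) {F : Type*} [NormedAddCommGroup F] [NormedSpace ℝ F]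
    [CompleteSpace F] {f : Euc d → F} (hf : Integrable f) :
    Tendsto (fun n => ∫⁻ x, ‖(∫ y, f y ∂(κ n x)) - f x‖ₑ) atTop (𝓝 0) := by
  rw [ENNReal.tendsto_nhds_zero]
  intro ε hε
  have hC1 : C + 1 ≠ ⊤ := by simp [h.C_ne]
  obtain ⟨g, hgs, hg, hgc, hgi⟩ := hf.exists_hasCompactSupport_lintegral_sub_le
    (ε := ε / 2 / (C + 1)) (ENNReal.div_pos (ENNReal.half_pos hε.ne').ne' hC1).ne'
  have h1 := (ENNReal.tendsto_nhds_zero.1 (h.tendsto_L1_cc hgi hgs hgc)) (ε / 2)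
    (ENNReal.half_pos hε.ne')
  filter_upwards [h1] with n hn
  have hme : AEMeasurable (fun x => ‖f x - g x‖ₑ) := (hf.1.sub hgi.1).enorm
  calc ∫⁻ x, ‖(∫ y, f y ∂(κ n x)) - f x‖ₑ
      ≤ ∫⁻ x, ((∫⁻ y, ‖f y - g y‖ₑ ∂(κ n x)) + (‖f x - g x‖ₑ + ‖(∫ y, g y ∂(κ n x)) - g x‖ₑ)) := by
        refine lintegral_mono fun x => ?_
        have e : (∫ y, f y ∂(κ n x)) - f x = (∫ y, (f y - g y) ∂(κ n x)) +
            (-(f x - g x) + ((∫ y, g y ∂(κ n x)) - g x)) := by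
          rw [integral_sub (h.integrable n x hf) (h.integrable n x hgi)]; abel
        rw [e]
        refine (enorm_add_le _ _).trans (add_le_add (enorm_integral_le_lintegral_enorm _) ?_)
        refine (enorm_add_le _ _).trans (add_le_add (by rw [enorm_neg]) le_rfl)
    _ = (∫⁻ x, ∫⁻ y, ‖f y - g y‖ₑ ∂(κ n x)) + ((∫⁻ x, ‖f x - g x‖ₑ) +
          ∫⁻ x, ‖(∫ y, g y ∂(κ n x)) - g x‖ₑ) := by
        rw [lintegral_add_left (h.meas_lint n hme), lintegral_add_left' hme]
    _ ≤ C * (∫⁻ x, ‖f x - g x‖ₑ) + ((∫⁻ x, ‖f x - g x‖ₑ) + ε / 2) := by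
        gcongr
        exact h.lint_lint_le' n hme
    _ = (C + 1) * (∫⁻ x, ‖f x - g x‖ₑ) + ε / 2 := by ring
    _ ≤ (C + 1) * (ε / 2 / (C + 1)) + ε / 2 := by gcongr
    _ = ε := by
        rw [ENNReal.mul_div_cancel (by simp) hC1, ENNReal.add_halves]

/-- Jensen's inequality. -/
lemma jensen (h : KerApprox κ δ C) {F : Type*} [NormedAddCommGroup F]
    {p : ℝ} (hp : 1 ≤ p) (n : ℕ) (x : Euc d) {f : Euc d → F} (hf : AEStronglyMeasurable f) :
    (∫⁻ y, ‖f y‖ₑ ∂(κ n x)) ^ p ≤ ∫⁻ y, ‖f y‖ₑ ^ p ∂(κ n x) := by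
  have := h.prob n x
  have hp0 : 0 < p := by linarith
  have := eLpNorm_le_eLpNorm_of_exponent_le (μ := κ n x) (p := 1) (q := ENNReal.ofReal p)
    (by simpa using hp) (hf.mono_ac (h.ac n x))
  rw [eLpNorm_one_eq_lintegral_enorm, eLpNorm_eq_lintegral_rpow_enorm_toReal (by simpa using hp0) (by simp),
    ENNReal.toReal_ofReal hp0.le] at this
  calc _ ≤ _ := ENNReal.rpow_le_rpow this hp0.le
    _ = _ := by rw [← ENNReal.rpow_mul]; field_simp; simp

lemma tendsto_Lp (h : KerApprox κ δ C) {F : Type*} [NormedAddCommGroup F] [NormedSpace ℝ F]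
    [CompleteSpace F] {p : ℝ} (hp : 1 ≤ p) {f : Euc d → F} (hf : Integrable f)
    (hfp : MemLp f (ENNReal.ofReal p)) :
    Tendsto (fun n => eLpNorm (fun x => (∫ y, f y ∂(κ n x)) - f x) (ENNReal.ofReal p) volume)
      atTop (𝓝 0) := by
  have hp0 : 0 < p := by linarith
  set g : Euc d → ℝ := fun x => ‖f x‖ ^ p with hg
  have hgi : Integrable g := by
    have := hfp.integrable_norm_rpow (by simpa using hp0) (by simp)
    rwa [ENNReal.toReal_ofReal hp0.le] at this
  have hge : ∀ x, ‖f x‖ₑ ^ p = ‖g x‖ₑ := fun x => by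
    simp only [hg]
    rw [Real.enorm_rpow_of_nonneg (norm_nonneg _) hp0.le]; simp
  have key : Tendsto (fun n => ∫⁻ x, ‖(∫ y, f y ∂(κ n x)) - f x‖ₑ ^ p) atTop
      (𝓝 (∫⁻ x : Euc d, (fun _ => (0 : ℝ≥0∞)) x)) := by
    set c : ℝ≥0∞ := 2 ^ (p - 1) with hc
    have hct : c ≠ ⊤ := by
      rw [hc]; exact ENNReal.rpow_ne_top_of_nonneg (by linarith) (by simp)
    refine dct_gen (G := fun x => c * (2 * ‖g x‖ₑ))
      (e := fun n x => c * ‖(∫ y, g y ∂(κ n x)) - g x‖ₑ) ?_ ?_ ?_ ?_ ?_ ?_ ?_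
    · intro n
      exact ((h.meas_int n hf.1).aestronglyMeasurable.sub hf.1).enorm.pow_const _
    · exact (hgi.1.enorm.const_mul _).const_mul _
    · rw [lintegral_const_mul' _ _ hct, lintegral_const_mul' _ _ (by simp)]
      exact ENNReal.mul_ne_top hct (ENNReal.mul_ne_top (by simp) hgi.2.ne)
    · have := ENNReal.Tendsto.const_mul (a := c) (h.tendsto_L1 hgi) (Or.inr hct)
      rw [mul_zero] at this
      refine this.congr fun n => ?_
      rw [lintegral_const_mul' _ _ hct]
    · filter_upwards [h.tendsto_ae hgi] with x hx
      rw [tendsto_iff_edist_tendsto_0] at hx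
      simp only [edist_eq_enorm_sub] at hx
      have := ENNReal.Tendsto.const_mul (a := c) hx (Or.inr hct)
      rwa [mul_zero] at this
    · refine Eventually.of_forall fun n => Eventually.of_forall fun x => ?_
      have hA : ‖∫ y, f y ∂(κ n x)‖ₑ ^ p ≤ ‖g x‖ₑ + ‖(∫ y, g y ∂(κ n x)) - g x‖ₑ := by
        calc ‖∫ y, f y ∂(κ n x)‖ₑ ^ p ≤ (∫⁻ y, ‖f y‖ₑ ∂(κ n x)) ^ p :=
              ENNReal.rpow_le_rpow (enorm_integral_le_lintegral_enorm _) hp0.le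
          _ ≤ ∫⁻ y, ‖f y‖ₑ ^ p ∂(κ n x) := h.jensen hp n x hf.1
          _ = ∫⁻ y, ENNReal.ofReal (g y) ∂(κ n x) := by
              refine lintegral_congr fun y => ?_
              rw [hge, Real.enorm_of_nonneg]; positivity
          _ = ENNReal.ofReal (∫ y, g y ∂(κ n x)) :=
              (ofReal_integral_eq_lintegral_ofReal (h.integrable n x hgi)
                (Eventually.of_forall fun y => by positivity)).symm
          _ ≤ ‖∫ y, g y ∂(κ n x)‖ₑ := by
              rw [← ofReal_norm]; exact ENNReal.ofReal_le_ofReal (Real.le_norm_self _)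
          _ = ‖g x + ((∫ y, g y ∂(κ n x)) - g x)‖ₑ := by congr 1; ring
          _ ≤ _ := enorm_add_le _ _
      calc ‖(∫ y, f y ∂(κ n x)) - f x‖ₑ ^ p
          ≤ (‖∫ y, f y ∂(κ n x)‖ₑ + ‖f x‖ₑ) ^ p := ENNReal.rpow_le_rpow enorm_sub_le hp0.le
        _ ≤ c * (‖∫ y, f y ∂(κ n x)‖ₑ ^ p + ‖f x‖ₑ ^ p) := ENNReal.rpow_add_le_mul_rpow_add_rpow _ _ hp
        _ ≤ c * ((‖g x‖ₑ + ‖(∫ y, g y ∂(κ n x)) - g x‖ₑ) + ‖g x‖ₑ) := by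
            gcongr
            exact (hge x).le
        _ = _ := by ring
    · filter_upwards [h.tendsto_ae hf] with x hx
      rw [tendsto_iff_edist_tendsto_0] at hx
      simp only [edist_eq_enorm_sub] at hx
      have := (ENNReal.continuous_rpow_const (y := p)).tendsto 0 |>.comp hx
      rw [ENNReal.zero_rpow_of_pos hp0] at this
      exact this
  have key2 := (ENNReal.continuous_rpow_const (y := 1 / p)).tendsto _ |>.comp key
  simp only [lintegral_const, zero_mul] at key2
  rw [ENNReal.zero_rpow_of_pos (by positivity)] at key2
  refine key2.congr fun n => ?_
  rw [eLpNorm_eq_lintegral_rpow_enorm_toReal (by simpa using hp0) (by simp), ENNReal.toReal_ofReal hp0.le]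
  rfl

end KerApprox

lemma ConvexENNReal.convexOn {m d : ℕ} {f : Mat m d → ℝ≥0∞} (hf : ConvexENNReal f)
    (hfin : ∀ ξ, f ξ < ⊤) : ConvexOn ℝ univ (fun ξ => (f ξ).toReal) := by
  refine ⟨convex_univ, fun ξ _ η _ a b ha hb hab => ?_⟩
  have hb' : b = 1 - a := by linarith
  have h1 := hf ξ η a ha (by linarith)
  rw [← hb'] at h1
  have h2 := ENNReal.toReal_mono (by
    exact ENNReal.add_ne_top.2 ⟨ENNReal.mul_ne_top (by simp) (hfin _).ne,
      ENNReal.mul_ne_top (by simp) (hfin _).ne⟩) h1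
  rw [ENNReal.toReal_add (ENNReal.mul_ne_top (by simp) (hfin _).ne)
      (ENNReal.mul_ne_top (by simp) (hfin _).ne), ENNReal.toReal_mul, ENNReal.toReal_mul,
      ENNReal.toReal_ofReal ha, ENNReal.toReal_ofReal hb] at h2
  simpa using h2

lemma ConvexENNReal.continuous {m d : ℕ} {f : Mat m d → ℝ≥0∞} (hf : ConvexENNReal f)
    (hfin : ∀ ξ, f ξ < ⊤) : Continuous f := by
  have h1 := (hf.convexOn hfin).locallyLipschitz.continuous
  have h2 : f = fun ξ => ENNReal.ofReal (f ξ).toReal := by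
    ext ξ; rw [ENNReal.ofReal_toReal (hfin ξ).ne]
  rw [h2]
  exact ENNReal.continuous_ofReal.comp h1

lemma exists_bound_fun {m d : ℕ} (Ω : Set (Euc d)) (W : Euc d → Mat m d → ℝ≥0∞)
    (hWm : Measurable (Function.uncurry W)) (hWfin : ∀ x ξ, W x ξ < ⊤)
    (hWint : ∀ ξ : Mat m d, (∫⁻ x in Ω, W x ξ) < ⊤) (R : ℝ) :
    ∃ Γ : Euc d → ℝ≥0∞, Measurable Γ ∧ (∫⁻ x in Ω, Γ x) < ⊤ ∧
      ∀ x, ConvexENNReal (W x) → ∀ ξ, ‖ξ‖ ≤ R → W x ξ ≤ Γ x := by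
  obtain ⟨b, hb, -⟩ := exists_mem_interior_convexHull_affineBasis (univ_mem : univ ∈ 𝓝 (0 : Mat m d))
  obtain ⟨r, hr, hrb⟩ := Metric.nhds_basis_closedBall.mem_iff.1 (mem_interior_iff_mem_nhds.1 hb)
  set R' := max R 1 with hR'
  have hR0 : 0 < R' := by positivity
  have hWm' : ∀ ξ, Measurable (fun x => W x ξ) := fun ξ =>
    hWm.comp (measurable_id.prodMk measurable_const)
  refine ⟨fun x => ∑ i, W x ((R' / r) • b i), ?_, ?_, ?_⟩
  · exact Finset.measurable_sum _ fun i _ => hWm' _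
  · rw [lintegral_finsetSum _ fun i _ => hWm' _]
    exact ENNReal.sum_lt_top.2 fun i _ => hWint _
  · intro x hx ξ hξ
    have hc : ConvexOn ℝ univ (fun η => (W x ((R' / r) • η)).toReal) :=
      (hx.convexOn (hWfin x)).comp_linearMap (LinearMap.lsmul ℝ (Mat m d) (R' / r))
    have hmem : (r / R') • ξ ∈ convexHull ℝ (range b) := by
      refine hrb ?_
      rw [mem_closedBall_zero_iff, norm_smul, Real.norm_of_nonneg (by positivity)]
      calc r / R' * ‖ξ‖ ≤ r / R' * R' := by gcongr; exact hξ.trans (le_max_left _ _)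
        _ = r := by field_simp
    obtain ⟨y, ⟨i, rfl⟩, hi⟩ := (hc.subset (subset_univ _) (convex_convexHull ℝ (range b))).exists_ge_of_mem_convexHull
      (subset_convexHull ℝ _) hmem
    have e : (R' / r) • (r / R') • ξ = ξ := by
      rw [smul_smul]; field_simp; simp
    simp only [e] at hi
    rw [ENNReal.toReal_le_toReal (hWfin _ _).ne (hWfin _ _).ne] at hi
    exact hi.trans (Finset.single_le_sum (f := fun i => W x ((R' / r) • b i))
      (fun _ _ => zero_le) (Finset.mem_univ i))

lemma essInf_le_ae {d : ℕ} (Ω : Set (Euc d)) (f : Euc d → ℝ≥0∞) :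
    ∀ᵐ x ∂volume.restrict Ω, ∀ δ : ℝ, 0 < δ →
      essInf f (volume.restrict (closedBall x δ ∩ Ω)) ≤ f x := by
  have h1 : ∀ᵐ x ∂volume.restrict Ω, ∀ i k : ℕ,
      x ∈ ball (TopologicalSpace.denseSeq (Euc d) i) (1 / ((k : ℝ) + 1)) →
      essInf f (volume.restrict (ball (TopologicalSpace.denseSeq (Euc d) i) (1 / ((k : ℝ) + 1)) ∩ Ω))
        ≤ f x := by
    rw [ae_all_iff]; intro i
    rw [ae_all_iff]; intro k
    have := ae_essInf_le (f := f)
      (μ := volume.restrict (ball (TopologicalSpace.denseSeq (Euc d) i) (1 / ((k : ℝ) + 1)) ∩ Ω))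
    rw [← Measure.restrict_restrict isOpen_ball.measurableSet] at this ⊢
    exact (ae_restrict_iff' isOpen_ball.measurableSet).1 this
  filter_upwards [h1] with x hx δ hδ
  obtain ⟨k, hk⟩ := exists_nat_one_div_lt (half_pos hδ)
  obtain ⟨i, hi⟩ := (TopologicalSpace.denseRange_denseSeq (Euc d)).exists_dist_lt x
    (ε := 1 / ((k : ℝ) + 1)) (by positivity)
  refine le_trans (essInf_antitone_measure ?_) (hx i k (mem_ball.2 hi))
  refine (Measure.restrict_mono ?_ le_rfl).absolutelyContinuous
  refine inter_subset_inter_left _ fun y hy => ?_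
  rw [mem_ball] at hy
  rw [mem_closedBall]
  have := dist_triangle_right y x (TopologicalSpace.denseSeq (Euc d) i)
  linarith

/-- Jensen's inequality for the biconjugate of the local essential infimum. -/
lemma biconj_le {m d : ℕ} (Ω : Set (Euc d)) (hΩ : MeasurableSet Ω)
    (W : Euc d → Mat m d → ℝ≥0∞)
    (hWc : ∀ᵐ x ∂volume.restrict Ω, Continuous (W x))
    (κ : Measure (Euc d)) [IsProbabilityMeasure κ] (x : Euc d) (δ : ℝ)
    (hκ : κ ≪ volume.restrict (closedBall x δ))
    (Du : Euc d → Mat m d) (hDu : Integrable (Ω.indicator Du) κ) :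
    biconj (fun η => essInf (fun y => W y η) (volume.restrict (closedBall x δ ∩ Ω)))
      (∫ y, Ω.indicator Du y ∂κ) ≤
    (∫⁻ y, Ω.indicator (fun y => W y (Du y)) y ∂κ) +
      essInf (fun y => W y 0) (volume.restrict (closedBall x δ ∩ Ω)) := by
  refine iSup_le fun L => iSup_le fun c => iSup_le fun hLc => ?_
  set a := essInf (fun y => W y 0) (volume.restrict (closedBall x δ ∩ Ω)) with ha
  have h0 : ENNReal.ofReal c ≤ a := by simpa using hLc 0
  have hLcont : Continuous L := L.continuous_of_finiteDimensional
  have hall : ∀ᵐ y ∂volume.restrict (closedBall x δ ∩ Ω), ∀ η, ENNReal.ofReal (L η + c) ≤ W y η := by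
    have h1 : ∀ᵐ y ∂volume.restrict (closedBall x δ ∩ Ω), ∀ i : ℕ,
        ENNReal.ofReal (L (TopologicalSpace.denseSeq (Mat m d) i) + c) ≤
          W y (TopologicalSpace.denseSeq (Mat m d) i) := by
      rw [ae_all_iff]; intro i
      filter_upwards [ae_essInf_le (f := fun y => W y (TopologicalSpace.denseSeq (Mat m d) i))
        (μ := volume.restrict (closedBall x δ ∩ Ω))] with y hy
      exact (hLc _).trans hy
    have h2 : ∀ᵐ y ∂volume.restrict (closedBall x δ ∩ Ω), Continuous (W y) :=
      ae_mono (Measure.restrict_mono inter_subset_right le_rfl) hWc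
    filter_upwards [h1, h2] with y hy1 hy2 η
    have hcl : IsClosed {η | ENNReal.ofReal (L η + c) ≤ W y η} :=
      isClosed_le (ENNReal.continuous_ofReal.comp (hLcont.add continuous_const)) hy2
    have := (TopologicalSpace.denseRange_denseSeq (Mat m d)).closure_range
    have hsub : closure (range (TopologicalSpace.denseSeq (Mat m d))) ⊆
        {η | ENNReal.ofReal (L η + c) ≤ W y η} :=
      closure_minimal (by rintro _ ⟨i, rfl⟩; exact hy1 i) hcl
    rw [this] at hsub
    exact hsub (mem_univ η)
  have hall2 : ∀ᵐ y ∂κ, y ∈ Ω → ∀ η, ENNReal.ofReal (L η + c) ≤ W y η := by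
    rw [inter_comm, ← Measure.restrict_restrict hΩ, ae_restrict_iff' hΩ] at hall
    exact hκ.ae_le hall
  have hLi : Integrable (fun y => L (Ω.indicator Du y)) κ :=
    (LinearMap.toContinuousLinearMap L).integrable_comp hDu
  have e : L (∫ y, Ω.indicator Du y ∂κ) + c = ∫ y, (L (Ω.indicator Du y) + c) ∂κ := by
    rw [integral_add hLi (integrable_const _)]
    have := (LinearMap.toContinuousLinearMap L).integral_comp_comm hDu
    simp only [LinearMap.coe_toContinuousLinearMap'] at this
    rw [this]; simp
  rw [e]
  calc ENNReal.ofReal (∫ y, (L (Ω.indicator Du y) + c) ∂κ)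
      ≤ ∫⁻ y, ENNReal.ofReal (L (Ω.indicator Du y) + c) ∂κ := by
        refine ENNReal.ofReal_le_of_le_toReal ?_
        rw [integral_eq_lintegral_pos_part_sub_lintegral_neg_part
          (f := fun y => L (Ω.indicator Du y) + c) (hLi.add (integrable_const c))]
        exact sub_le_self _ ENNReal.toReal_nonneg
    _ ≤ ∫⁻ y, (Ω.indicator (fun y => W y (Du y)) y + a) ∂κ := by
        refine lintegral_mono_ae ?_
        filter_upwards [hall2] with y hy
        by_cases hyΩ : y ∈ Ω
        · simp only [indicator_of_mem hyΩ]
          exact (hy hyΩ _).trans le_self_add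
        · simp only [indicator_of_notMem hyΩ, map_zero, zero_add]
          exact h0
    _ = _ := by
        rw [lintegral_add_right _ measurable_const]; simp

lemma frobNorm_le {m d : ℕ} (ξ : Mat m d) : frobNorm ξ ≤ ((m : ℝ) * d + 1) * ‖ξ‖ := by
  unfold frobNorm
  refine Real.sqrt_le_iff.2 ⟨by positivity, ?_⟩
  have h1 : ∀ i j, ξ i j ^ 2 ≤ ‖ξ‖ ^ 2 := fun i j => by
    rw [← sq_abs]
    have : |ξ i j| ≤ ‖ξ‖ := (norm_le_pi_norm (ξ i) j).trans (norm_le_pi_norm ξ i)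
    gcongr
  calc ∑ i, ∑ j, ξ i j ^ 2 ≤ ∑ _i : Fin m, ∑ _j : Fin d, ‖ξ‖ ^ 2 :=
        Finset.sum_le_sum fun i _ => Finset.sum_le_sum fun j _ => h1 i j
    _ = (m : ℝ) * d * ‖ξ‖ ^ 2 := by simp; ring
    _ ≤ (((m : ℝ) * d + 1) * ‖ξ‖) ^ 2 := by
        rw [mul_pow]
        gcongr
        nlinarith [mul_nonneg (Nat.cast_nonneg (α := ℝ) m) (Nat.cast_nonneg (α := ℝ) d)]

namespace KerApprox
variable {d : ℕ} {κ : ℕ → ProbabilityTheory.Kernel (Euc d) (Euc d)} {δ : ℕ → ℝ} {C : ℝ≥0∞}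

lemma enorm_rpow_le (h : KerApprox κ δ C) {F : Type*} [NormedAddCommGroup F] [NormedSpace ℝ F]
    {p : ℝ} (hp : 1 ≤ p) (n : ℕ) (x : Euc d) {f : Euc d → F} (hf : AEStronglyMeasurable f) :
    ‖∫ y, f y ∂(κ n x)‖ₑ ^ p ≤
      C / volume (closedBall (0 : Euc d) (δ n)) * ∫⁻ y in closedBall x (δ n), ‖f y‖ₑ ^ p := by
  calc ‖∫ y, f y ∂(κ n x)‖ₑ ^ p ≤ (∫⁻ y, ‖f y‖ₑ ∂(κ n x)) ^ p :=
        ENNReal.rpow_le_rpow (enorm_integral_le_lintegral_enorm _) (by linarith)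
    _ ≤ ∫⁻ y, ‖f y‖ₑ ^ p ∂(κ n x) := h.jensen hp n x hf
    _ ≤ _ := h.lint_le n x _

/-- If the energy in the ball is at most `a * δ^t`, the average is at most `A * δ^((t-d)/p)`. -/
lemma norm_le_of (h : KerApprox κ δ C) {F : Type*} [NormedAddCommGroup F] [NormedSpace ℝ F]
    {p : ℝ} (hp : 1 ≤ p) {f : Euc d → F} (hf : AEStronglyMeasurable f) (a : ℝ) (ha : 0 ≤ a) (t : ℝ) :
    ∃ A : ℝ, 0 ≤ A ∧ ∀ n x, ∫⁻ y in closedBall x (δ n), ‖f y‖ₑ ^ p ≤ ENNReal.ofReal (a * δ n ^ t) →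
      ‖∫ y, f y ∂(κ n x)‖ ≤ A * δ n ^ ((t - d) / p) := by
  have hp0 : 0 < p := by linarith
  set v : ℝ := (volume (ball (0 : Euc d) 1)).toReal with hv
  have hv0 : 0 < v := ENNReal.toReal_pos (measure_ball_pos volume _ one_pos).ne' measure_ball_lt_top.ne
  refine ⟨(C.toReal / v * a) ^ (1 / p), by positivity, fun n x hx => ?_⟩
  have hδ := h.pos n
  have hvol : volume (closedBall (0 : Euc d) (δ n)) = ENNReal.ofReal (δ n ^ d * v) := by
    rw [Measure.addHaar_closedBall _ _ hδ.le, ENNReal.ofReal_mul (by positivity), hv,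
      ENNReal.ofReal_toReal measure_ball_lt_top.ne]
    simp
  have h1 := (h.enorm_rpow_le hp n x hf).trans (mul_le_mul_right hx _)
  rw [hvol, ← ENNReal.ofReal_toReal h.C_ne, ← ENNReal.ofReal_div_of_pos (by positivity),
    ← ENNReal.ofReal_mul (by positivity), ← ofReal_norm, ENNReal.ofReal_rpow_of_nonneg (norm_nonneg _) hp0.le,
    ENNReal.ofReal_le_ofReal_iff (by positivity)] at h1
  have h2 : C.toReal / (δ n ^ d * v) * (a * δ n ^ t) = (C.toReal / v * a) * δ n ^ (t - d) := by
    rw [Real.rpow_sub hδ, Real.rpow_natCast]; field_simp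
  rw [h2] at h1
  have h3 := Real.rpow_le_rpow (by positivity) h1 (z := 1 / p) (by positivity)
  rw [← Real.rpow_mul (norm_nonneg _), mul_one_div_cancel hp0.ne', Real.rpow_one,
    Real.mul_rpow (by positivity) (by positivity), ← Real.rpow_mul hδ.le] at h3
  rwa [mul_one_div] at h3

end KerApprox

lemma energy_tendsto {m d : ℕ} (Ω : Set (Euc d)) (hΩo : IsOpen Ω) (hΩb : Bornology.IsBounded Ω)
    (p : ℝ) (hp1 : 1 ≤ p)
    (W : Euc d → Mat m d → ℝ≥0∞) (hWfin : ∀ x ξ, W x ξ < ⊤)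
    (hWm : Measurable (Function.uncurry W))
    (hWc : ∀ᵐ x ∂volume.restrict Ω, ConvexENNReal (W x))
    (hst : StabilityEstimate Ω p W)
    (hWint : ∀ ξ : Mat m d, (∫⁻ x in Ω, W x ξ) < ⊤)
    (Dg Dv : Euc d → Mat m d) (hDg : MemLp Dg ⊤ (volume.restrict Ω))
    (hDv : MemLp Dv (ENNReal.ofReal p) (volume.restrict Ω))
    (hF : ∫⁻ x in Ω, W x (Dg x + Dv x) ≠ ⊤)
    {κ : ℕ → ProbabilityTheory.Kernel (Euc d) (Euc d)} {δ : ℕ → ℝ} {C : ℝ≥0∞}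
    (h : KerApprox κ δ C)
    (J : ℕ → Euc d → Mat m d) (hJm : ∀ n, Measurable (J n)) (β : ℕ → ℝ)
    (hβ : Tendsto β atTop (𝓝 0))
    (hJ : ∀ n, ∀ x ∈ Ω, ‖J n x - ∫ y, Ω.indicator Dv y ∂(κ n x)‖ ≤ β n)
    (s : ℝ) (hs0 : 0 < s) (hs1 : s < 1) :
    Tendsto (fun n => ∫⁻ x in Ω, W x (Dg x + s • J n x)) atTop
      (𝓝 (∫⁻ x in Ω, W x (Dg x + s • Dv x))) := by
  have hp0 : 0 < p := by linarith
  have hΩm := hΩo.measurableSet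
  haveI : IsFiniteMeasure (volume.restrict Ω) :=
    ⟨by rw [Measure.restrict_apply_univ]; exact hΩb.measure_lt_top⟩
  have hDgp : MemLp Dg (ENNReal.ofReal p) (volume.restrict Ω) := hDg.mono_exponent le_top
  have h1p : (1 : ℝ≥0∞) ≤ ENNReal.ofReal p := by simpa using hp1
  have hDgi : Integrable (Ω.indicator Dg) :=
    (integrable_indicator_iff hΩm).2 (hDg.integrable le_top)
  have hDvi : Integrable (Ω.indicator Dv) :=
    (integrable_indicator_iff hΩm).2 (hDv.integrable h1p)
  set Du : Euc d → Mat m d := fun x => Dg x + Dv x with hDu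
  have hDup : MemLp Du (ENNReal.ofReal p) (volume.restrict Ω) := hDgp.add hDv
  have hDui : Integrable (Ω.indicator Du) :=
    (integrable_indicator_iff hΩm).2 (hDup.integrable h1p)
  have hWme : ∀ X : Euc d → Mat m d, AEMeasurable X (volume.restrict Ω) →
      AEMeasurable (fun x => W x (X x)) (volume.restrict Ω) := fun X hX =>
    hWm.comp_aemeasurable (aemeasurable_id.prodMk hX)
  have hWcont : ∀ᵐ x ∂volume.restrict Ω, Continuous (W x) := by
    filter_upwards [hWc] with x hx using hx.continuous (hWfin x)
  -- the averaged gradient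
  set X : ℕ → Euc d → Mat m d := fun n x => ∫ y, Ω.indicator Du y ∂(κ n x) with hX
  have hXm : ∀ n, Measurable (X n) := fun n => (h.meas_int n hDui.1).measurable
  -- growth bound
  obtain ⟨M, hM1, hM⟩ : ∃ M : ℝ, 1 < M ∧ ∀ n x, frobNorm (X n x) ≤ M * δ n ^ (-(d : ℝ) / p) := by
    have hfin : ∫⁻ y, ‖Ω.indicator Du y‖ₑ ^ p ≠ ⊤ := by
      have hmem : MemLp (Ω.indicator Du) (ENNReal.ofReal p) := (memLp_indicator_iff_restrict hΩm).2 hDup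
      have := lintegral_rpow_enorm_lt_top_of_eLpNorm_lt_top (by simpa using hp0) (by simp) hmem.2
      rw [ENNReal.toReal_ofReal hp0.le] at this
      exact this.ne
    obtain ⟨A, hA0, hA⟩ := h.norm_le_of hp1 hDui.1 (∫⁻ y, ‖Ω.indicator Du y‖ₑ ^ p).toReal
      ENNReal.toReal_nonneg 0
    refine ⟨((m : ℝ) * d + 1) * A + 2, by nlinarith [mul_nonneg (add_nonneg (mul_nonneg (Nat.cast_nonneg (α := ℝ) m) (Nat.cast_nonneg (α := ℝ) d)) zero_le_one) hA0], fun n x => ?_⟩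
    have h1 := hA n x (by
      rw [Real.rpow_zero, mul_one, ENNReal.ofReal_toReal hfin]
      exact setLIntegral_le_lintegral _ _)
    rw [zero_sub] at h1
    have h2 : 0 ≤ δ n ^ (-(d : ℝ) / p) := Real.rpow_nonneg (h.pos n).le _
    calc frobNorm (X n x) ≤ ((m : ℝ) * d + 1) * ‖X n x‖ := frobNorm_le _
      _ ≤ ((m : ℝ) * d + 1) * (A * δ n ^ (-(d : ℝ) / p)) := by gcongr
      _ ≤ _ := by nlinarith
  obtain ⟨CM, δ₀, αM, hCM, hδ₀, hαM, hstab⟩ := hst M hM1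
  obtain ⟨N, hN⟩ := eventually_atTop.1 (h.lim.eventually (gt_mem_nhds hδ₀))
  -- the energy density
  set F : Euc d → ℝ≥0∞ := fun x => W x (Du x) with hFdef
  have hFm : AEMeasurable F (volume.restrict Ω) := hWme _ hDup.1.aemeasurable
  set Fr : Euc d → ℝ := Ω.indicator (fun x => (F x).toReal) with hFr
  have hFri : Integrable Fr :=
    (integrable_indicator_iff hΩm).2 (integrable_toReal_of_lintegral_ne_top hFm hF)
  have hFr0 : ∀ x, 0 ≤ Fr x := fun x => indicator_nonneg (fun _ _ => ENNReal.toReal_nonneg) x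
  have hFrF : ∀ x, Ω.indicator F x = ENNReal.ofReal (Fr x) := fun x => by
    by_cases hx : x ∈ Ω
    · simp only [hFr, indicator_of_mem hx]; rw [ENNReal.ofReal_toReal (hWfin _ _).ne]
    · simp only [hFr, indicator_of_notMem hx]; simp
  have hFim : AEMeasurable (Ω.indicator F) := (aemeasurable_indicator_iff hΩm).2 hFm
  set H : ℕ → Euc d → ℝ≥0∞ := fun n x => (∫⁻ y, Ω.indicator F y ∂(κ n x)) + W x 0 with hH
  have hW0m : Measurable (fun x => W x 0) := hWm.comp (measurable_id.prodMk measurable_const)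
  have hHm : ∀ n, Measurable (H n) := fun n => (h.meas_lint n hFim).add hW0m
  set α : Euc d → ℝ≥0∞ := fun x => ⨆ n, ⨆ (_ : N ≤ n),
    (W x (X n x) - ENNReal.ofReal CM * H n x) with hα
  have hαm : Measurable α := by
    refine Measurable.iSup fun n => Measurable.iSup fun _ => ?_
    exact (hWm.comp (measurable_id.prodMk (hXm n))).sub ((hHm n).const_mul _)
  have hαint : ∫⁻ x in Ω, α x ≠ ⊤ := by
    refine (lt_of_le_of_lt (lintegral_mono_ae ?_) hαM).ne
    filter_upwards [essInf_le_ae Ω (fun y => W y 0), ae_restrict_mem hΩm] with x hx hxΩ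
    refine iSup_le fun n => iSup_le fun hn => ?_
    rw [tsub_le_iff_left]
    refine (hstab (δ n) (h.pos n) (hN n hn) x hxΩ (X n x) (hM n x)).trans ?_
    gcongr
    have := h.prob n x
    refine (biconj_le Ω hΩm W hWcont (κ n x) x (δ n) ?_ Du (h.integrable n x hDui)).trans ?_
    · exact (Measure.absolutelyContinuous_of_le (h.le n x)).trans Measure.smul_absolutelyContinuous
    · exact add_le_add le_rfl (hx (δ n) (h.pos n))
  have hXle : ∀ n, N ≤ n → ∀ x, W x (X n x) ≤ ENNReal.ofReal CM * H n x + α x := fun n hn x => by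
    rw [← tsub_le_iff_left]
    exact le_iSup₂ (f := fun n (_ : N ≤ n) => W x (X n x) - ENNReal.ofReal CM * H n x) n hn
  -- bounds for Dg
  obtain ⟨G, hG0, hG⟩ : ∃ G : ℝ, 0 ≤ G ∧ ∀ᵐ x ∂volume.restrict Ω, ‖Dg x‖ ≤ G := by
    have hfinG : eLpNormEssSup Dg (volume.restrict Ω) ≠ ⊤ := by
      rw [← eLpNorm_exponent_top]; exact hDg.2.ne
    refine ⟨(eLpNormEssSup Dg (volume.restrict Ω)).toReal, ENNReal.toReal_nonneg, ?_⟩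
    filter_upwards [ae_le_eLpNormEssSup (f := Dg) (μ := volume.restrict Ω)] with x hx
    have := ENNReal.toReal_mono hfinG hx
    rwa [toReal_enorm] at this
  have hAG : ∀ n x, ‖∫ y, Ω.indicator Dg y ∂(κ n x)‖ ≤ G := fun n x => by
    have := h.prob n x
    have hG2 : ∀ᵐ y ∂(κ n x), ‖Ω.indicator Dg y‖ ≤ G := by
      refine (h.ac n x).ae_le ?_
      filter_upwards [(ae_restrict_iff' hΩm).1 hG] with y hy
      by_cases hyΩ : y ∈ Ω
      · rw [indicator_of_mem hyΩ]; exact hy hyΩ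
      · rw [indicator_of_notMem hyΩ]; simpa using hG0
    simpa using norm_integral_le_of_norm_le_const hG2
  obtain ⟨Γ, hΓm, hΓi, hΓ⟩ := exists_bound_fun Ω W hWm hWfin hWint ((1 - s)⁻¹ * (G + G + 1))
  have hCt : ENNReal.ofReal CM ≠ ⊤ := by simp
  refine dct_gen (G := fun x => ENNReal.ofReal CM * (F x + W x 0) + α x + Γ x)
    (e := fun n x => ENNReal.ofReal CM * ‖(∫ y, Fr y ∂(κ n x)) - Fr x‖ₑ) ?_ ?_ ?_ ?_ ?_ ?_ ?_
  · intro n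
    exact hWme _ (hDg.1.aemeasurable.add ((hJm n).aemeasurable.const_smul s))
  · exact (((hFm.add hW0m.aemeasurable).const_mul _).add hαm.aemeasurable).add hΓm.aemeasurable
  · rw [lintegral_add_right _ hΓm, lintegral_add_right _ hαm, lintegral_const_mul' _ _ hCt,
      lintegral_add_right _ hW0m]
    exact ENNReal.add_ne_top.2 ⟨ENNReal.add_ne_top.2 ⟨ENNReal.mul_ne_top hCt
      (ENNReal.add_ne_top.2 ⟨hF, (hWint 0).ne⟩), hαint⟩, hΓi.ne⟩
  · have := ENNReal.Tendsto.const_mul (a := ENNReal.ofReal CM) (h.tendsto_L1 hFri) (Or.inr hCt)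
    rw [mul_zero] at this
    refine tendsto_of_tendsto_of_tendsto_of_le_of_le tendsto_const_nhds this
      (fun _ => zero_le) fun n => ?_
    simp only
    rw [lintegral_const_mul' _ _ hCt]
    gcongr
    exact Measure.restrict_le_self
  · filter_upwards [ae_restrict_of_ae (s := Ω) (h.tendsto_ae hFri)] with x hx
    rw [tendsto_iff_edist_tendsto_0] at hx
    simp only [edist_eq_enorm_sub] at hx
    have := ENNReal.Tendsto.const_mul (a := ENNReal.ofReal CM) hx (Or.inr hCt)
    rwa [mul_zero] at this
  · filter_upwards [eventually_ge_atTop N, hβ.eventually (gt_mem_nhds one_pos)] with n hn hβn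
    filter_upwards [hG, hWc, ae_restrict_mem hΩm] with x hGx hcx hxΩ
    set Rn : Mat m d := (1 - s)⁻¹ • (Dg x - s • (∫ y, Ω.indicator Dg y ∂(κ n x)) +
      s • (J n x - ∫ y, Ω.indicator Dv y ∂(κ n x))) with hRn
    have hs' : 0 < 1 - s := by linarith
    have hXe : X n x = (∫ y, Ω.indicator Dg y ∂(κ n x)) + ∫ y, Ω.indicator Dv y ∂(κ n x) := by
      rw [← integral_add (h.integrable n x hDgi) (h.integrable n x hDvi)]
      simp only [hX, hDu]
      congr 1
      ext1 y
      exact congrFun (indicator_add Ω Dg Dv) y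
    have hdec : Dg x + s • J n x = s • X n x + (1 - s) • Rn := by
      rw [hRn, smul_smul, mul_inv_cancel₀ hs'.ne', one_smul, hXe]
      module
    have hRb : ‖Rn‖ ≤ (1 - s)⁻¹ * (G + G + 1) := by
      rw [hRn, norm_smul, Real.norm_of_nonneg (by positivity)]
      gcongr
      refine (norm_add_le _ _).trans (add_le_add ((norm_sub_le _ _).trans (add_le_add hGx ?_)) ?_)
      · rw [norm_smul, Real.norm_of_nonneg hs0.le]
        have := hAG n x
        nlinarith [norm_nonneg (∫ y, Ω.indicator Dg y ∂(κ n x))]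
      · rw [norm_smul, Real.norm_of_nonneg hs0.le]
        have := hJ n x hxΩ
        nlinarith [norm_nonneg (J n x - ∫ y, Ω.indicator Dv y ∂(κ n x))]
    have hFav : (∫⁻ y, Ω.indicator F y ∂(κ n x)) ≤ F x + ‖(∫ y, Fr y ∂(κ n x)) - Fr x‖ₑ := by
      simp_rw [hFrF]
      rw [← ofReal_integral_eq_lintegral_ofReal (h.integrable n x hFri) (Eventually.of_forall hFr0)]
      have e1 : F x = ENNReal.ofReal (Fr x) := by rw [← hFrF, indicator_of_mem hxΩ]
      rw [e1, ← ofReal_norm, ← ENNReal.ofReal_add (hFr0 x) (norm_nonneg _)]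
      refine ENNReal.ofReal_le_ofReal ?_
      have := Real.le_norm_self ((∫ y, Fr y ∂(κ n x)) - Fr x)
      linarith
    calc W x (Dg x + s • J n x) ≤ ENNReal.ofReal s * W x (X n x) + ENNReal.ofReal (1 - s) * W x Rn := by
          rw [hdec]; exact hcx _ _ s hs0.le hs1.le
      _ ≤ 1 * W x (X n x) + 1 * W x Rn := by
          gcongr
          · exact ENNReal.ofReal_le_one.2 hs1.le
          · exact ENNReal.ofReal_le_one.2 (by linarith)
      _ ≤ (ENNReal.ofReal CM * ((F x + ‖(∫ y, Fr y ∂(κ n x)) - Fr x‖ₑ) + W x 0) + α x) + Γ x := by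
          rw [one_mul, one_mul]
          refine add_le_add ((hXle n hn x).trans ?_) (hΓ x hcx _ hRb)
          gcongr
          exact add_le_add hFav le_rfl
      _ = _ := by ring
  · filter_upwards [hWcont, ae_restrict_mem hΩm, ae_restrict_of_ae (s := Ω) (h.tendsto_ae hDvi)]
      with x hcx hxΩ hx
    rw [indicator_of_mem hxΩ] at hx
    have hJx : Tendsto (fun n => J n x) atTop (𝓝 (Dv x)) := by
      have h0 : Tendsto (fun n => J n x - ∫ y, Ω.indicator Dv y ∂(κ n x)) atTop (𝓝 0) :=
        squeeze_zero_norm (fun n => hJ n x hxΩ) hβ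
      simpa using h0.add hx
    exact (hcx.tendsto _).comp ((hJx.const_smul s).const_add (Dg x))

/-- The exterior cone property of a Lipschitz subgraph. -/
lemma cone_fact {d : ℕ} {Ω : Set (Euc d)} {c ν : Euc d} {r L : ℝ} {ψ : Euc d → ℝ}
    (hν : ‖ν‖ = 1) (hL : 0 ≤ L) (hψ : LipschitzWith (Real.toNNReal L) ψ)
    (hΩ : ∀ y ∈ ball c r, (y ∈ Ω ↔ ⟪y, ν⟫ < ψ (y - ⟪y, ν⟫ • ν)))
    {y w : Euc d} {t : ℝ} (hy : y ∈ ball c r) (hy' : y + t • ν + w ∈ ball c r)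
    (hyΩ : y ∉ Ω) (hw : (2 * L + 1) * ‖w‖ ≤ t) : y + t • ν + w ∉ Ω := by
  rw [hΩ _ hy] at hyΩ
  rw [hΩ _ hy']
  push Not at hyΩ ⊢
  have hνν : ⟪ν, ν⟫ = (1 : ℝ) := by rw [real_inner_self_eq_norm_sq, hν]; norm_num
  have h1 : ⟪y + t • ν + w, ν⟫ = ⟪y, ν⟫ + t + ⟪w, ν⟫ := by
    rw [inner_add_left, inner_add_left, real_inner_smul_left, hνν, mul_one]
  have hwν : |⟪w, ν⟫| ≤ ‖w‖ := by
    have := abs_real_inner_le_norm w ν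
    rwa [hν, mul_one] at this
  have h2 : y + t • ν + w - ⟪y + t • ν + w, ν⟫ • ν = (y - ⟪y, ν⟫ • ν) + (w - ⟪w, ν⟫ • ν) := by
    rw [h1]; module
  have h3 := hψ.dist_le_mul (y + t • ν + w - ⟪y + t • ν + w, ν⟫ • ν) (y - ⟪y, ν⟫ • ν)
  rw [h2, Real.coe_toNNReal _ hL, dist_eq_norm, dist_eq_norm, add_sub_cancel_left] at h3
  have h4 : ‖w - ⟪w, ν⟫ • ν‖ ≤ 2 * ‖w‖ := by
    refine (norm_sub_le _ _).trans ?_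
    rw [norm_smul, hν, mul_one, Real.norm_eq_abs]; linarith
  have h5 : L * ‖w - ⟪w, ν⟫ • ν‖ ≤ L * (2 * ‖w‖) := by gcongr
  have h6 := (Real.le_norm_self _).trans h3
  rw [h2, h1]
  have := neg_abs_le (⟪w, ν⟫ : ℝ)
  linarith

lemma exists_geom {d : ℕ} (Ω : Set (Euc d)) (hΩb : Bornology.IsBounded Ω)
    (hΩl : HasLipschitzBoundary Ω) :
    ∃ (N : Euc d → Euc d) (Λ r : ℝ), ContDiff ℝ (⊤ : ℕ∞) N ∧ 0 < r ∧
      (∀ x, ‖N x‖ + 1 ≤ Λ) ∧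
      ∀ ε : ℝ, 0 < ε → ε * Λ < r → ∀ x X : Euc d, ‖X - x‖ ≤ r → ∀ y ∈ Ω,
        ‖x + ε • N X - y‖ < ε → ∀ z, z ∉ Ω → ε ≤ dist x z := by
  have hcomp : IsCompact (frontier Ω) :=
    Metric.isCompact_of_isClosed_isBounded isClosed_frontier (hΩb.closure.subset frontier_subset_closure)
  have hΩl' : ∀ x : frontier Ω, ∃ (ν : Euc d) (r L : ℝ) (ψ : Euc d → ℝ),
    ‖ν‖ = 1 ∧ 0 < r ∧ 0 ≤ L ∧ LipschitzWith (Real.toNNReal L) ψ ∧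
    ∀ y ∈ ball (x : Euc d) r, (y ∈ Ω ↔ ⟪y, ν⟫ < ψ (y - ⟪y, ν⟫ • ν)) := fun x => hΩl x x.2
  choose ν ρ L ψ hν hρ hL hψ hloc using hΩl'
  obtain ⟨t, ht⟩ := hcomp.elim_nhds_subcover' (fun x hx => ball x (ρ ⟨x, hx⟩ / 4))
    (fun x hx => ball_mem_nhds _ (by have := hρ ⟨x, hx⟩; positivity))
  -- constants
  set K : ℝ := 1 + ∑ i ∈ t, 2 * (2 * L i + 1) with hK
  have hK1 : 1 ≤ K := by
    have : 0 ≤ ∑ i ∈ t, 2 * (2 * L i + 1) := Finset.sum_nonneg fun i _ => by have := hL i; positivity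
    linarith
  have hKi : ∀ i ∈ t, 2 * (2 * L i + 1) ≤ K := fun i hi => by
    have := Finset.single_le_sum (f := fun i => 2 * (2 * L i + 1))
      (fun i _ => by have := hL i; positivity) hi
    linarith
  obtain ⟨r, hr0, hr⟩ : ∃ r : ℝ, 0 < r ∧ ∀ i ∈ t, 8 * r ≤ ρ i := by
    rcases t.eq_empty_or_nonempty with rfl | hne
    · exact ⟨1, one_pos, by simp⟩
    · obtain ⟨i, hi, hmin⟩ := t.exists_min_image ρ hne
      exact ⟨ρ i / 8, by have := hρ i; positivity, fun j hj => by have := hmin j hj; linarith⟩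
  let η : (i : frontier Ω) → ContDiffBump (i : Euc d) := fun i =>
    ⟨ρ i / 2, 3 * ρ i / 4, by have := hρ i; positivity, by have := hρ i; linarith⟩
  refine ⟨fun x => ∑ i ∈ t, (K * η i x) • ν i, 1 + K * t.card, r, ?_, hr0, ?_, ?_⟩
  · exact ContDiff.sum fun i _ => (contDiff_const.mul (η i).contDiff).smul contDiff_const
  · intro x
    have : ‖∑ i ∈ t, (K * η i x) • ν i‖ ≤ ∑ _i ∈ t, K := by
      refine norm_sum_le_of_le _ fun i _ => ?_
      rw [norm_smul, hν, mul_one, Real.norm_of_nonneg (mul_nonneg (by linarith) (η i).nonneg)]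
      have := (η i).le_one (x := x)
      nlinarith
    rw [Finset.sum_const, nsmul_eq_mul] at this
    linarith
  · intro ε hε hεΛ x X hX y hy hxy z hz
    by_contra! hlt
    simp only at hxy
    -- partial sums
    have hpart : ∀ s ⊆ t, ‖∑ i ∈ s, (ε * (K * η i X)) • ν i‖ ≤ ε * (K * t.card) := fun s hs => by
      have : ‖∑ i ∈ s, (ε * (K * η i X)) • ν i‖ ≤ ∑ _i ∈ s, ε * K := by
        refine norm_sum_le_of_le _ fun i _ => ?_
        rw [norm_smul, hν, mul_one, Real.norm_of_nonneg
          (mul_nonneg hε.le (mul_nonneg (by linarith) (η i).nonneg))]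
        have := (η i).le_one (x := X)
        gcongr
        nlinarith
      refine this.trans ?_
      rw [Finset.sum_const, nsmul_eq_mul]
      have : (s.card : ℝ) ≤ t.card := by exact_mod_cast Finset.card_le_card hs
      nlinarith [mul_pos hε (by linarith : 0 < K)]
    have hsmul : ε • ∑ i ∈ t, (K * η i X) • ν i = ∑ i ∈ t, (ε * (K * η i X)) • ν i := by
      rw [Finset.smul_sum]; simp_rw [smul_smul]
    rw [hsmul] at hxy
    have hzx : dist z x < r := by
      rw [dist_comm]
      have : 0 ≤ ε * (K * t.card) := by positivity
      nlinarith
    have hyx : dist y x < r := by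
      have h1 := hpart t subset_rfl
      have h2 : dist y x ≤ ‖x + ∑ i ∈ t, (ε * (K * η i X)) • ν i - y‖ + ‖∑ i ∈ t, (ε * (K * η i X)) • ν i‖ := by
        rw [dist_comm, dist_eq_norm]
        have : x - y = (x + ∑ i ∈ t, (ε * (K * η i X)) • ν i - y) - ∑ i ∈ t, (ε * (K * η i X)) • ν i := by abel
        rw [this]; exact norm_sub_le _ _
      linarith
    -- a boundary point
    obtain ⟨b, hbs, hbf⟩ : (segment ℝ z y ∩ frontier Ω).Nonempty := by
      by_contra hcon
      have hsub : segment ℝ z y ⊆ interior Ω ∪ interior Ωᶜ := fun b hb => by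
        rw [← compl_frontier_eq_union_interior]
        exact fun hbf => hcon ⟨b, hb, hbf⟩
      have hyi : y ∈ interior Ω := (hsub (right_mem_segment ℝ z y)).resolve_right
        fun h => interior_subset h hy
      have hzi : z ∈ interior Ωᶜ := (hsub (left_mem_segment ℝ z y)).resolve_left
        fun h => hz (interior_subset h)
      obtain ⟨q, _, hq1, hq2⟩ := (convex_segment z y).isPreconnected _ _ isOpen_interior
        isOpen_interior hsub ⟨y, right_mem_segment ℝ z y, hyi⟩ ⟨z, left_mem_segment ℝ z y, hzi⟩
      exact interior_subset hq2 (interior_subset hq1)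
    have hbx : dist b x < r := (convex_ball x r).segment_subset hzx hyx hbs
    obtain ⟨i0, hi0, hbi⟩ : ∃ i0 ∈ t, dist b (i0 : Euc d) < ρ i0 / 4 := by
      have := ht hbf
      simp only [mem_iUnion] at this
      obtain ⟨i0, h1, h2⟩ := this
      exact ⟨i0, h1, h2⟩
    have hη0 : η i0 X = 1 := by
      apply (η i0).one_of_mem_closedBall
      show dist X i0 ≤ ρ i0 / 2
      have h1 := dist_triangle4 X x b i0
      rw [dist_eq_norm X x, dist_comm x b] at h1
      have := hr i0 hi0
      linarith
    -- all relevant points are in the balls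
    have hball : ∀ i ∈ t, η i X ≠ 0 → ∀ q, dist q x < r → q ∈ ball (i : Euc d) (ρ i) := by
      intro i hi hη q hq
      have h0 : X ∈ Function.support (η i) := hη
      rw [(η i).support_eq] at h0
      have h0' : dist X i < 3 * ρ i / 4 := h0
      rw [mem_ball]
      have h1 := dist_triangle4 q x X i
      rw [dist_comm x X, dist_eq_norm X x] at h1
      have := hr i hi
      linarith
    have hq : ∀ s ⊆ t, dist (z + ∑ i ∈ s, (ε * (K * η i X)) • ν i) x < r := by
      intro s hs
      have h1 := hpart s hs
      have h2 := dist_triangle (z + ∑ i ∈ s, (ε * (K * η i X)) • ν i) z x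
      rw [dist_self_add_left, dist_comm z x] at h2
      linarith
    have hwalk : ∀ s ⊆ t, z + ∑ i ∈ s, (ε * (K * η i X)) • ν i ∉ Ω := by
      intro s
      induction s using Finset.induction_on with
      | empty => intro _; simpa using hz
      | insert a s ha ih =>
        intro hs
        have hs' : s ⊆ t := (Finset.subset_insert a s).trans hs
        have hat : a ∈ t := hs (Finset.mem_insert_self a s)
        have ih' := ih hs'
        have e : z + ∑ i ∈ insert a s, (ε * (K * η i X)) • ν i =
            (z + ∑ i ∈ s, (ε * (K * η i X)) • ν i) + (ε * (K * η a X)) • ν a + 0 := by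
          rw [Finset.sum_insert ha]; abel
        by_cases hη : η a X = 0
        · rw [e, hη]; simpa using ih'
        · have h2 := hball a hat hη _ (hq _ hs)
          rw [e] at h2 ⊢
          refine cone_fact (hν a) (hL a) (hψ a) (hloc a) (hball a hat hη _ (hq s hs')) h2 ih' ?_
          rw [norm_zero, mul_zero]
          exact mul_nonneg hε.le (mul_nonneg (by linarith) (η a).nonneg)
    -- last step
    have hlast := hwalk (t.erase i0) (Finset.erase_subset _ _)
    have hη0' : η i0 X ≠ 0 := by rw [hη0]; exact one_ne_zero
    set P := ∑ i ∈ t.erase i0, (ε * (K * η i X)) • ν i with hP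
    have hsum : ∑ i ∈ t, (ε * (K * η i X)) • ν i = P + (ε * K) • ν i0 := by
      rw [hP, ← Finset.sum_erase_add t _ hi0, hη0, mul_one]
    have hye : y = (z + P) + (ε * K) • ν i0 + ((x - z) + (y - (x + (P + (ε * K) • ν i0)))) := by abel
    have hyb := hball i0 hi0 hη0' y hyx
    have hzb := hball i0 hi0 hη0' _ (hq _ (Finset.erase_subset i0 t))
    rw [hsum] at hxy
    have hw : ‖(x - z) + (y - (x + (P + (ε * K) • ν i0)))‖ ≤ 2 * ε := by
      refine (norm_add_le _ _).trans ?_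
      rw [← dist_eq_norm x z, norm_sub_rev y]
      linarith
    refine absurd hy ?_
    rw [hye]
    rw [hye] at hyb
    refine cone_fact (hν i0) (hL i0) (hψ i0) (hloc i0) hzb hyb hlast ?_
    have h1 := hKi i0 hi0
    have h2 := hL i0
    calc (2 * L i0 + 1) * _ ≤ (2 * L i0 + 1) * (2 * ε) := by gcongr
      _ ≤ ε * K := by nlinarith

/-- Most points are such that the `μ`-mass of intervals around them is at most linear. -/
lemma exists_good_set (μ : Measure ℝ) [IsFiniteMeasure μ] (R τ : ℝ) (hτ : 0 < τ) :
    ∃ (G : Set ℝ) (c r : ℝ), 0 ≤ c ∧ 0 < r ∧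
      volume (Icc (-R) R \ closure G) ≤ ENNReal.ofReal τ ∧
      ∀ t ∈ G, ∀ ρ, 0 < ρ → ρ < r → μ (closedBall t ρ) ≤ ENNReal.ofReal (c * ρ) := by
  set G : ℕ → Set ℝ := fun l => {t | ∀ ρ, 0 < ρ → ρ < 1 / ((l : ℝ) + 1) →
    μ (closedBall t ρ) ≤ ENNReal.ofReal (l * ρ)} with hG
  have hmono : Monotone G := by
    intro l l' hl t ht ρ h0 h1
    have hl' : (l : ℝ) ≤ l' := by exact_mod_cast hl
    refine (ht ρ h0 (h1.trans_le ?_)).trans (ENNReal.ofReal_le_ofReal (by gcongr))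
    exact one_div_le_one_div_of_le (by positivity) (by linarith)
  have hae : ∀ᵐ t : ℝ, ∃ l, t ∈ G l := by
    filter_upwards [Besicovitch.ae_tendsto_rnDeriv μ (volume : Measure ℝ),
      Measure.rnDeriv_lt_top μ (volume : Measure ℝ)] with t ht hlt
    obtain ⟨q, hq1, hq2⟩ := ENNReal.lt_iff_exists_nnreal_btwn.1 hlt
    have hev := ht.eventually (gt_mem_nhds hq1)
    obtain ⟨a, ha, hev⟩ := mem_nhdsGT_iff_exists_Ioo_subset.1 hev
    obtain ⟨l, hl⟩ := exists_nat_ge (max (2 * (q : ℝ)) (1 / a))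
    have ha0 : 0 < a := ha
    refine ⟨l, fun ρ h0 h1 => ?_⟩
    have hρa : ρ < a := by
      refine h1.trans_le ?_
      rw [one_div_le (by positivity) ha0]
      have := (le_max_right _ _).trans hl
      linarith
    have h2 : μ (closedBall t ρ) / volume (closedBall t ρ) < q := hev ⟨h0, hρa⟩
    have h3 : volume (closedBall t ρ) = ENNReal.ofReal (2 * ρ) := Real.volume_closedBall t ρ
    rw [h3] at h2
    have h4 := (ENNReal.div_le_iff (by simpa using h0) ENNReal.ofReal_ne_top).1 h2.le
    refine h4.trans ?_
    rw [← ENNReal.ofReal_coe_nnreal, ← ENNReal.ofReal_mul (by positivity)]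
    refine ENNReal.ofReal_le_ofReal ?_
    have := (le_max_left _ _).trans hl
    nlinarith
  have hanti : Antitone (fun l => Icc (-R) R \ closure (G l)) := fun l l' hl =>
    sdiff_subset_sdiff_right (closure_mono (hmono hl))
  have hlim := tendsto_measure_iInter_atTop (μ := volume) (s := fun l => Icc (-R) R \ closure (G l))
    (fun l => (measurableSet_Icc.diff isClosed_closure.measurableSet).nullMeasurableSet) hanti
    ⟨0, ((measure_mono sdiff_subset).trans_lt isCompact_Icc.measure_lt_top).ne⟩
  have h0 : volume (⋂ l, Icc (-R) R \ closure (G l)) = 0 := by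
    refine measure_mono_null ?_ (ae_iff.1 hae)
    intro t ht
    simp only [mem_ofPred_eq, not_exists]
    intro l hl
    exact (mem_iInter.1 ht l).2 (subset_closure hl)
  rw [h0] at hlim
  obtain ⟨l, hl⟩ := (hlim.eventually (gt_mem_nhds (ENNReal.ofReal_pos.2 hτ))).exists
  exact ⟨G l, l, 1 / ((l : ℝ) + 1), by positivity, by positivity, hl.le, fun t ht => ht⟩

lemma exists_T1 (μ : Measure ℝ) [IsFiniteMeasure μ] (R τ : ℝ) (hτ : 0 < τ) :
    ∃ (c r : ℝ), 0 ≤ c ∧ 0 < r ∧ ∀ ε : ℝ, 0 < ε → ∃ T χ : ℝ → ℝ,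
      ContDiff ℝ (⊤ : ℕ∞) T ∧ (∀ t, HasDerivAt T (χ t) t) ∧ (∀ t, |χ t| ≤ 1) ∧
      (∀ t, |t| ≤ R → |T t - t| ≤ τ) ∧
      ∀ t, χ t ≠ 0 → ∀ ρ, ε ≤ ρ → ρ < r → μ (closedBall t ρ) ≤ ENNReal.ofReal (c * ρ) := by
  obtain ⟨G, c, r, hc, hr, hvol, hG⟩ := exists_good_set μ R τ hτ
  refine ⟨2 * c, r / 2, by positivity, by positivity, fun ε hε => ?_⟩
  have hdisj : Disjoint (thickening ε G)ᶜ (closure G) :=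
    disjoint_left.2 fun t ht ht' => ht (closure_subset_thickening hε G ht')
  obtain ⟨χ', h0, h1, h01⟩ := exists_contMDiffMap_zero_one_of_isClosed (n := ⊤) (modelWithCornersSelf ℝ ℝ)
    (M := ℝ) isOpen_thickening.isClosed_compl isClosed_closure hdisj
  set χ : ℝ → ℝ := fun t => χ' t with hχ
  have hχs : ContDiff ℝ (⊤ : ℕ∞) χ := (contMDiff_iff_contDiff.1 χ'.contMDiff)
  have hχc : Continuous χ := hχs.continuous
  have hder : ∀ t, HasDerivAt (fun t => ∫ s in (0 : ℝ)..t, χ s) (χ t) t := fun t =>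
    intervalIntegral.integral_hasDerivAt_right (hχc.intervalIntegrable _ _)
      (hχc.stronglyMeasurableAtFilter _ _) hχc.continuousAt
  refine ⟨fun t => ∫ s in (0 : ℝ)..t, χ s, χ, ?_, hder, ?_, ?_, ?_⟩
  · refine contDiff_infty_iff_deriv.2 ⟨fun t => (hder t).differentiableAt, ?_⟩
    have : deriv (fun t => ∫ s in (0 : ℝ)..t, χ s) = χ := funext fun t => (hder t).deriv
    rw [this]; exact hχs
  · intro t
    exact abs_le.2 ⟨by have := (h01 t).1; linarith, (h01 t).2⟩
  · intro t ht
    have e : (∫ s in (0 : ℝ)..t, χ s) - t = ∫ s in (0 : ℝ)..t, (χ s - 1) := by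
      rw [intervalIntegral.integral_sub (hχc.intervalIntegrable _ _) (by simp)]; simp
    rw [e, ← Real.norm_eq_abs]
    refine (intervalIntegral.norm_integral_le_integral_norm_uIoc).trans ?_
    have hsub : uIoc 0 t ⊆ Icc (-R) R := by
      intro s hs
      have := abs_le.1 ht
      rcases mem_uIoc.1 hs with h | h <;> constructor <;> linarith [h.1, h.2]
    have hm : MeasurableSet (Icc (-R) R \ closure G) :=
      measurableSet_Icc.diff isClosed_closure.measurableSet
    have hle : volume (Icc (-R) R \ closure G) ≠ ⊤ := (hvol.trans_lt ENNReal.ofReal_lt_top).ne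
    calc ∫ s in uIoc 0 t, ‖χ s - 1‖ ≤ ∫ s in uIoc 0 t, (Icc (-R) R \ closure G).indicator (fun _ => (1 : ℝ)) s := by
          refine setIntegral_mono_on ?_ ?_ measurableSet_uIoc ?_
          · have : Continuous (fun s => ‖χ s - 1‖) := (hχc.sub continuous_const).norm
            exact (intervalIntegrable_iff.1 (this.intervalIntegrable 0 t))
          · exact ((integrable_indicator_iff hm).2 (integrableOn_const hle)).integrableOn
          · intro s hs
            by_cases hsG : s ∈ closure G
            · rw [show χ s = 1 from h1 hsG]; simp [hsG]
            · rw [indicator_of_mem (show s ∈ Icc (-R) R \ closure G from ⟨hsub hs, hsG⟩), Real.norm_eq_abs]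
              have := h01 s
              exact abs_le.2 ⟨by linarith [this.1], by linarith [this.2]⟩
      _ ≤ ∫ s, (Icc (-R) R \ closure G).indicator (fun _ => (1 : ℝ)) s :=
          setIntegral_le_integral ((integrable_indicator_iff hm).2 (integrableOn_const hle))
            (Eventually.of_forall fun s => indicator_nonneg (fun _ _ => zero_le_one) s)
      _ = (volume (Icc (-R) R \ closure G)).toReal := by
          rw [integral_indicator hm]; simp [Measure.real]
      _ ≤ τ := ENNReal.toReal_le_of_le_ofReal hτ.le hvol
  · intro t ht ρ hρ hρr
    have htG : t ∈ thickening ε G := by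
      by_contra hcon
      exact ht (h0 hcon)
    obtain ⟨s, hs, hts⟩ := mem_thickening_iff.1 htG
    have hsub : closedBall t ρ ⊆ closedBall s (2 * ρ) := closedBall_subset_closedBall' (by linarith)
    refine (measure_mono hsub).trans ((hG s hs _ (by linarith) (by linarith)).trans_eq ?_)
    congr 1; ring

lemma euc_sum_single {d : ℕ} (x : Euc d) : ∑ j, x j • EuclideanSpace.single j (1 : ℝ) = x := by
  ext i
  simp [Finset.sum_apply, Pi.single_apply]

lemma exists_T {d : ℕ} (μ : Measure (Euc d)) [IsFiniteMeasure μ] (R τ : ℝ) (hτ : 0 < τ) :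
    ∃ (c r : ℝ), 0 ≤ c ∧ 0 < r ∧ ∀ ε : ℝ, 0 < ε → ∃ T : Euc d → Euc d,
      ContDiff ℝ (⊤ : ℕ∞) T ∧ (∀ x, ‖x‖ ≤ R → ‖T x - x‖ ≤ τ) ∧
      ∀ x j, ∃ a : ℝ, |a| ≤ 1 ∧
        fderiv ℝ T x (EuclideanSpace.single j 1) = a • EuclideanSpace.single j 1 ∧
        (a ≠ 0 → ∀ ρ, ε ≤ ρ → ρ < r → μ (closedBall x ρ) ≤ ENNReal.ofReal (c * ρ)) := by
  have hT1 := fun j : Fin d => exists_T1 (μ.map (fun x : Euc d => x j)) R (τ / (d + 1)) (by positivity)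
  choose c r hc hr hT using hT1
  obtain ⟨r', hr'0, hr'⟩ : ∃ r' : ℝ, 0 < r' ∧ ∀ j, r' ≤ r j := by
    rcases (Finset.univ : Finset (Fin d)).eq_empty_or_nonempty with h | hne
    · exact ⟨1, one_pos, fun j => absurd (Finset.mem_univ j) (by simp [h])⟩
    · obtain ⟨i, _, hmin⟩ := Finset.univ.exists_min_image r hne
      exact ⟨r i, hr i, fun j => hmin j (Finset.mem_univ j)⟩
  refine ⟨∑ j, c j, r', Finset.sum_nonneg fun j _ => hc j, hr'0, fun ε hε => ?_⟩
  choose t χ htc hder hχ hclose hgood using fun j => hT j ε hε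
  have hderT : ∀ x : Euc d, HasFDerivAt (fun x : Euc d => ∑ j, t j (x j) • EuclideanSpace.single j (1 : ℝ))
      (∑ j, (χ j (x j) • (EuclideanSpace.proj j : Euc d →L[ℝ] ℝ)).smulRight (EuclideanSpace.single j (1 : ℝ))) x := by
    intro x
    refine HasFDerivAt.fun_sum fun j _ => ?_
    refine HasFDerivAt.smul_const ?_ _
    exact (hder j (x j)).comp_hasFDerivAt x (EuclideanSpace.proj j : Euc d →L[ℝ] ℝ).hasFDerivAt
  refine ⟨fun x => ∑ j, t j (x j) • EuclideanSpace.single j (1 : ℝ), ?_, ?_, ?_⟩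
  · refine ContDiff.sum fun j _ => ContDiff.fun_smul ?_ contDiff_const
    exact (htc j).comp (EuclideanSpace.proj j : Euc d →L[ℝ] ℝ).contDiff
  · intro x hx
    have e : (∑ j, t j (x j) • EuclideanSpace.single j (1 : ℝ)) - x =
        ∑ j, (t j (x j) - x j) • EuclideanSpace.single j (1 : ℝ) := by
      conv_lhs => rw [← euc_sum_single x]
      simp_rw [sub_smul]
      rw [Finset.sum_sub_distrib]
      simp only [euc_sum_single]
    simp only
    rw [e]
    have h1 : ‖∑ j, (t j (x j) - x j) • EuclideanSpace.single j (1 : ℝ)‖ ≤ ∑ _j : Fin d, τ / (d + 1) := by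
      refine norm_sum_le_of_le _ fun j _ => ?_
      rw [norm_smul, PiLp.norm_single, norm_one, mul_one, Real.norm_eq_abs]
      exact hclose j (x j) ((PiLp.norm_apply_le x j).trans hx)
    refine h1.trans ?_
    rw [Finset.sum_const, Finset.card_univ, Fintype.card_fin, nsmul_eq_mul, mul_div_assoc', div_le_iff₀ (by positivity)]
    nlinarith
  · intro x j
    refine ⟨χ j (x j), hχ j _, ?_, ?_⟩
    · rw [(hderT x).fderiv]
      simp only [sum_apply, ContinuousLinearMap.smulRight_apply,
        smul_apply, smul_eq_mul]
      rw [Finset.sum_eq_single j]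
      · simp
      · intro k _ hk; simp [hk]
      · simp
    · intro ha ρ h1 h2
      have h3 := hgood j _ ha ρ h1 (h2.trans_le (hr' j))
      have hmeas : Measurable (fun x : Euc d => x j) := by fun_prop
      rw [Measure.map_apply hmeas measurableSet_closedBall] at h3
      refine (measure_mono ?_).trans (h3.trans (ENNReal.ofReal_le_ofReal ?_))
      · intro y hy
        rw [mem_closedBall, dist_eq_norm] at hy
        show dist (y j) (x j) ≤ ρ
        rw [dist_eq_norm]
        exact (PiLp.norm_apply_le (y - x) j).trans hy
      · have := Finset.single_le_sum (f := c) (fun i _ => hc i) (Finset.mem_univ j)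
        have : 0 < ρ := by linarith
        gcongr

/-- The kernel of averaging around `S x` with a normalized bump function. -/
def bumpKer {d : ℕ} (ρ : ContDiffBump (0 : Euc d)) (S : Euc d → Euc d) :
    ProbabilityTheory.Kernel (Euc d) (Euc d) :=
  ProbabilityTheory.Kernel.withDensity (ProbabilityTheory.Kernel.const _ volume)
    (fun x y => ENNReal.ofReal (ρ.normed volume (S x - y)))

lemma bumpKer_apply {d : ℕ} (ρ : ContDiffBump (0 : Euc d)) {S : Euc d → Euc d} (hS : Measurable S)
    (x : Euc d) : bumpKer ρ S x =
      (volume : Measure (Euc d)).withDensity (fun y => ENNReal.ofReal (ρ.normed volume (S x - y))) := by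
  unfold bumpKer
  rw [ProbabilityTheory.Kernel.withDensity_apply]
  · rfl
  · have : Measurable (ρ.normed volume : Euc d → ℝ) := ρ.continuous_normed.measurable
    exact (this.comp ((hS.comp measurable_fst).sub measurable_snd)).ennreal_ofReal

lemma integral_bumpKer {d : ℕ} (ρ : ContDiffBump (0 : Euc d)) {S : Euc d → Euc d} (hS : Measurable S)
    {F : Type*} [NormedAddCommGroup F] [NormedSpace ℝ F] (f : Euc d → F)
    (x : Euc d) : ∫ y, f y ∂(bumpKer ρ S x) = ∫ y, ρ.normed volume (S x - y) • f y := by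
  have hm : Measurable (fun y => ENNReal.ofReal (ρ.normed volume (S x - y))) := by
    have : Measurable (ρ.normed volume : Euc d → ℝ) := ρ.continuous_normed.measurable
    exact (this.comp (measurable_const.sub measurable_id)).ennreal_ofReal
  rw [bumpKer_apply ρ hS, integral_withDensity_eq_integral_toReal_smul hm (by simp)]
  congr 1
  ext1 y
  rw [ENNReal.toReal_ofReal (ρ.nonneg_normed _)]

lemma kerApprox_bump {d : ℕ} (ρ : ℕ → ContDiffBump (0 : Euc d)) (S : ℕ → Euc d → Euc d)
    (hS : ∀ n, Measurable (S n)) (ε : ℕ → ℝ) (hε : ∀ n, 0 < ε n) (hlim : Tendsto ε atTop (𝓝 0))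
    (hout : ∀ n, (ρ n).rOut = ε n) (hin : ∀ n, (ρ n).rIn = ε n / 2) (Λ : ℝ) (hΛ : 1 ≤ Λ)
    (hSΛ : ∀ n x, ‖S n x - x‖ + ε n ≤ ε n * Λ) :
    KerApprox (fun n => bumpKer (ρ n) (S n)) (fun n => ε n * Λ) (ENNReal.ofReal (2 ^ d * Λ ^ d)) where
  C_ne := ENNReal.ofReal_ne_top
  pos n := by have := hε n; positivity
  lim := by simpa using hlim.mul_const Λ
  prob n x := by
    constructor
    rw [bumpKer_apply _ (hS n), withDensity_apply _ MeasurableSet.univ, Measure.restrict_univ,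
      lintegral_sub_left_eq_self (fun y => ENNReal.ofReal ((ρ n).normed volume y)),
      ← ofReal_integral_eq_lintegral_ofReal (ρ n).integrable_normed
        (Eventually.of_forall fun y => (ρ n).nonneg_normed y), (ρ n).integral_normed]
    simp
  le n x := by
    have hεn := hε n
    rw [bumpKer_apply _ (hS n)]
    rw [← withDensity_const,
      ← withDensity_indicator measurableSet_closedBall]
    refine withDensity_mono (Eventually.of_forall fun y => ?_)
    by_cases hy : y ∈ closedBall x (ε n * Λ)
    · rw [indicator_of_mem hy]
      have h1 := (ρ n).normed_le_div_measure_closedBall_rOut volume 2 (by rw [hout, hin]; linarith) (S n x - y)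
      rw [hout] at h1
      have hv : (volume (closedBall (0 : Euc d) (ε n * Λ))) =
          ENNReal.ofReal (Λ ^ d * volume.real (closedBall (0 : Euc d) (ε n))) := by
        rw [Measure.addHaar_closedBall _ _ (by positivity), Measure.addHaar_real_closedBall _ _ hεn.le,
          ← mul_assoc, mul_comm (Λ ^ d), ENNReal.ofReal_mul (by positivity), Measure.real,
          ENNReal.ofReal_toReal measure_ball_lt_top.ne, mul_pow]
        simp
      have hpos : 0 < volume.real (closedBall (0 : Euc d) (ε n)) :=
        ENNReal.toReal_pos (measure_closedBall_pos _ _ hεn).ne' measure_closedBall_lt_top.ne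
      rw [hv, ← ENNReal.ofReal_div_of_pos (by positivity)]
      refine ENNReal.ofReal_le_ofReal (h1.trans_eq ?_)
      simp only [finrank_euclideanSpace, Fintype.card_fin]
      field_simp
    · have : (ρ n).normed volume (S n x - y) = 0 := by
        by_contra hne
        have h2 : S n x - y ∈ Function.support ((ρ n).normed volume) := hne
        rw [(ρ n).support_normed_eq, mem_ball_zero_iff, hout] at h2
        apply hy
        rw [mem_closedBall, dist_comm, dist_eq_norm]
        have h3 : x - y = (S n x - y) - (S n x - x) := by abel
        rw [h3]
        have := hSΛ n x
        exact (norm_sub_le _ _).trans (by linarith)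
      simp only [this]; simp

/-- Mollification by a bump function. -/
def moll {d m : ℕ} (ρ : ContDiffBump (0 : Euc d)) (w : Euc d → Euc m) (z : Euc d) : Euc m :=
  ∫ y, ρ.normed volume (z - y) • w y

lemma moll_eq {d m : ℕ} (ρ : ContDiffBump (0 : Euc d)) (w : Euc d → Euc m) :
    moll ρ w = convolution (ρ.normed volume) w (ContinuousLinearMap.lsmul ℝ ℝ) volume := by
  ext1 z
  rw [convolution_lsmul_swap]; rfl

lemma moll_contDiff {d m : ℕ} (ρ : ContDiffBump (0 : Euc d)) {w : Euc d → Euc m}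
    (hw : ContDiff ℝ (⊤ : ℕ∞) w) (hc : HasCompactSupport w) : ContDiff ℝ (⊤ : ℕ∞) (moll ρ w) := by
  rw [moll_eq]
  exact hc.contDiff_convolution_right _ ρ.integrable_normed.locallyIntegrable hw

lemma moll_fderiv {d m : ℕ} (ρ : ContDiffBump (0 : Euc d)) {w : Euc d → Euc m}
    (hw : ContDiff ℝ (⊤ : ℕ∞) w) (hc : HasCompactSupport w) (z e : Euc d) :
    fderiv ℝ (moll ρ w) z e = ∫ y, ρ.normed volume (z - y) • fderiv ℝ w y e := by
  have hw1 : ContDiff ℝ 1 w := hw.of_le (by exact_mod_cast le_top)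
  have hloc : LocallyIntegrable (ρ.normed volume : Euc d → ℝ) := ρ.integrable_normed.locallyIntegrable
  rw [moll_eq, (hc.hasFDerivAt_convolution_right (ContinuousLinearMap.lsmul ℝ ℝ) hloc hw1 z).fderiv,
    convolution_precompR_apply _ hloc (hc.fderiv ℝ) (hw1.continuous_fderiv one_ne_zero),
    convolution_lsmul_swap]

lemma smoothJac_continuous {d m : ℕ} {w : Euc d → Euc m} (hw : ContDiff ℝ (⊤ : ℕ∞) w) :
    Continuous (smoothJac w) := by
  have hw1 : ContDiff ℝ 1 w := hw.of_le (by exact_mod_cast le_top)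
  have := hw1.continuous_fderiv one_ne_zero
  unfold smoothJac
  refine continuous_pi fun i => continuous_pi fun j => ?_
  have h2 : Continuous fun x => fderiv ℝ w x (EuclideanSpace.single j 1) := this.clm_apply continuous_const
  fun_prop

lemma smoothJac_hcs {d m : ℕ} {w : Euc d → Euc m} (hc : HasCompactSupport w) :
    HasCompactSupport (smoothJac w) := by
  refine (hc.fderiv ℝ).mono' (fun x hx => subset_closure ?_)
  intro h0
  apply hx
  ext i j
  simp [smoothJac, h0]

lemma integrable_normed_smul {d : ℕ} {F : Type*} [NormedAddCommGroup F] [NormedSpace ℝ F]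
    (ρ : ContDiffBump (0 : Euc d)) {f : Euc d → F} (hf : Integrable f) (z : Euc d) :
    Integrable (fun y => ρ.normed volume (z - y) • f y) := by
  obtain ⟨B, hB⟩ := ρ.continuous_normed (μ := volume) |>.bounded_above_of_compact_support
    ρ.hasCompactSupport_normed
  refine hf.bdd_smul B ?_ ?_
  · exact (ρ.continuous_normed.comp (continuous_const.sub continuous_id)).aestronglyMeasurable
  · exact Eventually.of_forall fun y => hB _

lemma smoothJac_moll {d m : ℕ} (ρ : ContDiffBump (0 : Euc d)) {w : Euc d → Euc m}
    (hw : ContDiff ℝ (⊤ : ℕ∞) w) (hc : HasCompactSupport w) (z : Euc d) :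
    smoothJac (moll ρ w) z = ∫ y, ρ.normed volume (z - y) • smoothJac w y := by
  have hw1 : ContDiff ℝ 1 w := hw.of_le (by exact_mod_cast le_top)
  have hJi1 : Integrable (smoothJac w) :=
    (smoothJac_continuous hw).integrable_of_hasCompactSupport (smoothJac_hcs hc)
  ext i j
  have h1 := ((ContinuousLinearMap.proj (R := ℝ) (φ := fun _ : Fin d => ℝ) j).comp
    (ContinuousLinearMap.proj (R := ℝ) (φ := fun _ : Fin m => Fin d → ℝ) i)).integral_comp_comm
      (integrable_normed_smul ρ hJi1 z)
  have hJi2 : Integrable (fun y => fderiv ℝ w y (EuclideanSpace.single j 1)) :=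
    ((hw1.continuous_fderiv one_ne_zero).clm_apply continuous_const).integrable_of_hasCompactSupport
      ((hc.fderiv_apply ℝ _))
  have h2 := (EuclideanSpace.proj i : Euc m →L[ℝ] ℝ).integral_comp_comm
      (integrable_normed_smul ρ hJi2 z)
  show fderiv ℝ (moll ρ w) z (EuclideanSpace.single j 1) i = _
  rw [moll_fderiv ρ hw hc]
  exact h2.symm.trans h1

lemma fderiv_apply_le {d m : ℕ} (V : Euc d → Euc m) (z e : Euc d) (i : Fin m) :
    |fderiv ℝ V z e i| ≤ d * ‖e‖ * ‖smoothJac V z‖ := by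
  have h1 : fderiv ℝ V z e i = ∑ j, e j * smoothJac V z i j := by
    conv_lhs => rw [← euc_sum_single e]
    rw [map_sum]
    simp only [map_smul, smoothJac]
    rw [WithLp.ofLp_sum, Finset.sum_apply]
    rfl
  rw [h1]
  refine (Finset.abs_sum_le_sum_abs _ _).trans ?_
  calc ∑ j, |e j * smoothJac V z i j| ≤ ∑ _j : Fin d, ‖e‖ * ‖smoothJac V z‖ := by
        refine Finset.sum_le_sum fun j _ => ?_
        rw [abs_mul]
        have h2 : |e j| ≤ ‖e‖ := PiLp.norm_apply_le e j
        have h3 : |smoothJac V z i j| ≤ ‖smoothJac V z‖ :=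
          (norm_le_pi_norm (smoothJac V z i) j).trans (norm_le_pi_norm (smoothJac V z) i)
        gcongr
    _ = _ := by simp; ring

lemma smoothJac_comp {d m : ℕ} {V : Euc d → Euc m} {N T : Euc d → Euc d} (hV : Differentiable ℝ V)
    (hN : Differentiable ℝ N) (hT : Differentiable ℝ T) (ε : ℝ) (x : Euc d) (j : Fin d) (a : ℝ)
    (ha : fderiv ℝ T x (EuclideanSpace.single j 1) = a • EuclideanSpace.single j 1) (i : Fin m) :
    smoothJac (fun x => V (x + ε • N (T x))) x i j = smoothJac V (x + ε • N (T x)) i j +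
      ε * a * fderiv ℝ V (x + ε • N (T x)) (fderiv ℝ N (T x) (EuclideanSpace.single j 1)) i := by
  have hS : HasFDerivAt (fun x => x + ε • N (T x))
      (ContinuousLinearMap.id ℝ (Euc d) + ε • ((fderiv ℝ N (T x)).comp (fderiv ℝ T x))) x :=
    (hasFDerivAt_id x).add (((hN (T x)).hasFDerivAt.comp x (hT x).hasFDerivAt).const_smul ε)
  have hφ := (hV (x + ε • N (T x))).hasFDerivAt.comp x hS
  show fderiv ℝ (V ∘ fun x => x + ε • N (T x)) x (EuclideanSpace.single j 1) i = _
  rw [hφ.fderiv]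
  simp [ha, smoothJac, mul_assoc]

lemma moll_close {d : ℕ} {F : Type*} [NormedAddCommGroup F] [NormedSpace ℝ F]
    (Ω : Set (Euc d)) (hΩm : MeasurableSet Ω) (hΩb : Bornology.IsBounded Ω) (p : ℝ) (hp1 : 1 ≤ p)
    (f : ℕ → Euc d → F) (g : Euc d → F) (hf : ∀ n, Integrable (f n)) (hf0 : ∀ n, ∀ x, x ∉ Ω → f n x = 0)
    (hg : MemLp g (ENNReal.ofReal p) (volume.restrict Ω))
    (hlim : Tendsto (fun n => eLpNorm (f n - g) (ENNReal.ofReal p) (volume.restrict Ω)) atTop (𝓝 0))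
    (ρ : ContDiffBump (0 : Euc d)) (γ : ℝ) (hγ : 0 < γ) :
    ∀ᶠ n in atTop, ∀ z, ‖(∫ y, ρ.normed volume (z - y) • f n y) -
      ∫ y, ρ.normed volume (z - y) • Ω.indicator g y‖ ≤ γ := by
  obtain ⟨B, hB⟩ := ρ.continuous_normed (μ := volume) |>.bounded_above_of_compact_support
    ρ.hasCompactSupport_normed
  have : IsFiniteMeasure (volume.restrict Ω) :=
    ⟨by rw [Measure.restrict_apply_univ]; exact hΩb.measure_lt_top⟩
  have h1p : (1 : ℝ≥0∞) ≤ ENNReal.ofReal p := by simpa using hp1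
  have hgi : Integrable (Ω.indicator g) := (integrable_indicator_iff hΩm).2 (hg.integrable h1p)
  set c : ℝ≥0∞ := (volume.restrict Ω) univ ^ (1 / (1 : ℝ≥0∞).toReal - 1 / (ENNReal.ofReal p).toReal) with hc
  have hct : c ≠ ⊤ := by
    refine ENNReal.rpow_ne_top_of_nonneg ?_ (measure_ne_top _ _)
    rw [ENNReal.toReal_ofReal (by linarith)]
    simp only [ENNReal.toReal_one]
    have : 1 / p ≤ 1 := by rw [div_le_one (by linarith)]; exact hp1
    simpa using this
  have hlim2 : Tendsto (fun n => ENNReal.ofReal B *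
      (eLpNorm (f n - g) (ENNReal.ofReal p) (volume.restrict Ω) * c)) atTop (𝓝 0) := by
    have := ENNReal.Tendsto.const_mul (a := ENNReal.ofReal B)
      (ENNReal.Tendsto.mul_const hlim (Or.inr hct)) (Or.inr ENNReal.ofReal_ne_top)
    simpa using this
  filter_upwards [hlim2.eventually (gt_mem_nhds (ENNReal.ofReal_pos.2 hγ))] with n hn z
  rw [← integral_sub (integrable_normed_smul ρ (hf n) z) (integrable_normed_smul ρ hgi z)]
  rw [← ENNReal.ofReal_le_ofReal_iff hγ.le, ofReal_norm]
  refine le_trans ?_ hn.le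
  calc ‖∫ y, (ρ.normed volume (z - y) • f n y - ρ.normed volume (z - y) • Ω.indicator g y)‖ₑ
      ≤ ∫⁻ y, ‖ρ.normed volume (z - y) • f n y - ρ.normed volume (z - y) • Ω.indicator g y‖ₑ :=
        enorm_integral_le_lintegral_enorm _
    _ ≤ ∫⁻ y, ENNReal.ofReal B * Ω.indicator (fun y => ‖(f n - g) y‖ₑ) y := by
        refine lintegral_mono fun y => ?_
        rw [← smul_sub, enorm_smul]
        gcongr
        · rw [← ofReal_norm]; exact ENNReal.ofReal_le_ofReal (hB _)
        · by_cases hy : y ∈ Ω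
          · simp [hy]
          · simp [hy, hf0 n y hy]
    _ = ENNReal.ofReal B * eLpNorm (f n - g) 1 (volume.restrict Ω) := by
        rw [lintegral_const_mul' _ _ ENNReal.ofReal_ne_top, lintegral_indicator hΩm,
          eLpNorm_one_eq_lintegral_enorm]
    _ ≤ _ := by
        gcongr
        exact eLpNorm_le_eLpNorm_mul_rpow_measure_univ h1p ((hf n).1.restrict.sub hg.1)

lemma exists_approx {d m : ℕ} (Ω : Set (Euc d)) (hΩo : IsOpen Ω) (hΩb : Bornology.IsBounded Ω)
    (hΩl : HasLipschitzBoundary Ω) (p : ℝ) (hp1 : 1 ≤ p) (hpd : (d : ℝ) - 1 < p)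
    (v : Euc d → Euc m) (Dv : Euc d → Mat m d) (hv : MemW1p0 Ω (ENNReal.ofReal p) v Dv) :
    ∃ (κ : ℕ → ProbabilityTheory.Kernel (Euc d) (Euc d)) (δ : ℕ → ℝ) (C : ℝ≥0∞) (β : ℕ → ℝ)
      (φ : ℕ → Euc d → Euc m), KerApprox κ δ C ∧ Tendsto β atTop (𝓝 0) ∧
      (∀ n, IsCcSmooth Ω (φ n)) ∧
      (∀ n, ∀ x ∈ Ω, ‖φ n x - ∫ y, Ω.indicator v y ∂(κ n x)‖ ≤ β n) ∧
      (∀ n, ∀ x ∈ Ω, ‖smoothJac (φ n) x - ∫ y, Ω.indicator Dv y ∂(κ n x)‖ ≤ β n) := by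
  have hp0 : 0 < p := by linarith
  have hΩm := hΩo.measurableSet
  have : IsFiniteMeasure (volume.restrict Ω) :=
    ⟨by rw [Measure.restrict_apply_univ]; exact hΩb.measure_lt_top⟩
  have h1p : (1 : ℝ≥0∞) ≤ ENNReal.ofReal p := by simpa using hp1
  obtain ⟨⟨hvp, hDvp, -⟩, w, hw, hwv, hwDv⟩ := hv
  have hDvi : Integrable (Ω.indicator Dv) :=
    (integrable_indicator_iff hΩm).2 (hDvp.integrable h1p)
  -- geometry
  obtain ⟨N, Λ, r, hNs, hr, hNΛ, hgeom⟩ := exists_geom Ω hΩb hΩl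
  have hΛ : 1 ≤ Λ := by have := hNΛ 0; have := norm_nonneg (N 0); linarith
  obtain ⟨R, hR⟩ := hΩb.subset_closedBall 0
  have hN1 : ContDiff ℝ 1 N := hNs.of_le (by exact_mod_cast le_top)
  obtain ⟨D, hD⟩ := (isCompact_closedBall (0 : Euc d) (R + r + r)).exists_bound_of_continuousOn
    (hN1.continuous_fderiv one_ne_zero).continuousOn
  -- the energy measure
  have hfin : ∫⁻ y, ‖Ω.indicator Dv y‖ₑ ^ p ≠ ⊤ := by
    have hmem : MemLp (Ω.indicator Dv) (ENNReal.ofReal p) := (memLp_indicator_iff_restrict hΩm).2 hDvp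
    have := lintegral_rpow_enorm_lt_top_of_eLpNorm_lt_top (by simpa using hp0) (by simp) hmem.2
    rw [ENNReal.toReal_ofReal hp0.le] at this
    exact this.ne
  set μ : Measure (Euc d) := volume.withDensity (fun y => ‖Ω.indicator Dv y‖ₑ ^ p) with hμ
  have : IsFiniteMeasure μ := isFiniteMeasure_withDensity hfin
  obtain ⟨c, rT, hc, hrT, hT⟩ := exists_T μ (R + r) r hr
  -- scales
  set ε₀ : ℝ := min r rT / (2 * Λ) with hε₀
  have hε₀pos : 0 < ε₀ := by have := lt_min hr hrT; positivity
  set ε : ℕ → ℝ := fun n => ε₀ * (1 / ((n : ℝ) + 1)) with hε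
  have hεpos : ∀ n, 0 < ε n := fun n => by simp only [hε]; positivity
  have hεlim : Tendsto ε atTop (𝓝 0) := by
    have := (tendsto_one_div_add_atTop_nhds_zero_nat (𝕜 := ℝ)).const_mul ε₀
    rwa [mul_zero] at this
  have hεΛ : ∀ n, ε n * Λ < r ∧ ε n * Λ < rT := fun n => by
    have h1 : ε n ≤ ε₀ := by
      simp only [hε]
      have : 1 / ((n : ℝ) + 1) ≤ 1 := by
        rw [div_le_one (by positivity)]; have := Nat.cast_nonneg (α := ℝ) n; linarith
      nlinarith
    have h2 : ε₀ * Λ = min r rT / 2 := by rw [hε₀]; field_simp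
    have h3 : ε n * Λ ≤ ε₀ * Λ := by gcongr
    have := lt_min hr hrT
    exact ⟨by linarith [min_le_left r rT], by linarith [min_le_right r rT]⟩
  choose T hTs hTclose hTder using fun n => hT (ε n) (hεpos n)
  set S : ℕ → Euc d → Euc d := fun n x => x + ε n • N (T n x) with hS
  have hSs : ∀ n, ContDiff ℝ (⊤ : ℕ∞) (S n) := fun n =>
    contDiff_id.add ((hNs.comp (hTs n)).const_smul (ε n))
  have hSm : ∀ n, Measurable (S n) := fun n => (hSs n).continuous.measurable
  have hSΛ : ∀ n x, ‖S n x - x‖ + ε n ≤ ε n * Λ := fun n x => by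
    simp only [hS, add_sub_cancel_left]
    rw [norm_smul, Real.norm_of_nonneg (hεpos n).le]
    have := hNΛ (T n x)
    nlinarith [hεpos n]
  let ρ : ℕ → ContDiffBump (0 : Euc d) := fun n =>
    ⟨ε n / 2, ε n, by have := hεpos n; positivity, by have := hεpos n; linarith⟩
  have hker := kerApprox_bump ρ S hSm ε hεpos hεlim (fun _ => rfl) (fun _ => rfl) Λ hΛ hSΛ
  obtain ⟨A, hA0, hA⟩ := hker.norm_le_of hp1 hDvi.1 c hc 1
  -- choice of the smooth functions
  set γ : ℕ → ℝ := fun n => 1 / ((n : ℝ) + 1) with hγ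
  have hγ0 : ∀ n, 0 < γ n := fun n => by simp only [hγ]; positivity
  have hwt : ∀ n x, x ∉ Ω → w n x = 0 := fun n x hx =>
    image_eq_zero_of_notMem_tsupport fun h => hx ((hw n).2.2 h)
  have hJt : ∀ n x, x ∉ Ω → smoothJac (w n) x = 0 := fun n x hx => by
    have h0 : fderiv ℝ (w n) x = 0 := image_eq_zero_of_notMem_tsupport
      fun h => hx ((hw n).2.2 (tsupport_fderiv_subset ℝ h))
    ext i j
    simp [smoothJac, h0]
  have hsel : ∀ n, ∃ k, (∀ z, ‖(∫ y, (ρ n).normed volume (z - y) • w k y) -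
      ∫ y, (ρ n).normed volume (z - y) • Ω.indicator v y‖ ≤ γ n) ∧
      ∀ z, ‖(∫ y, (ρ n).normed volume (z - y) • smoothJac (w k) y) -
      ∫ y, (ρ n).normed volume (z - y) • Ω.indicator Dv y‖ ≤ γ n := fun n => by
    have h1 := moll_close Ω hΩm hΩb p hp1 w v
      (fun k => (hw k).1.continuous.integrable_of_hasCompactSupport (hw k).2.1) hwt hvp hwv (ρ n) (γ n) (hγ0 n)
    have h2 := moll_close Ω hΩm hΩb p hp1 (fun k => smoothJac (w k)) Dv
      (fun k => (smoothJac_continuous (hw k).1).integrable_of_hasCompactSupport (smoothJac_hcs (hw k).2.1))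
      hJt hDvp hwDv (ρ n) (γ n) (hγ0 n)
    exact (h1.and h2).exists
  choose k hk1 hk2 using hsel
  have hd0 : (0 : ℝ) ≤ d := Nat.cast_nonneg d
  set δ : ℕ → ℝ := fun n => ε n * Λ with hδ
  have hδ0 : ∀ n, 0 < δ n := hker.pos
  refine ⟨fun n => bumpKer (ρ n) (S n), δ, _,
    fun n => γ n + d * max D 0 * (ε n * γ n + A * Λ⁻¹ * δ n ^ (1 + (1 - (d : ℝ)) / p)),
    fun n x => moll (ρ n) (w (k n)) (S n x), hker, ?_, ?_, ?_, ?_⟩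
  · have he : 0 < 1 + (1 - (d : ℝ)) / p := by
      have : 1 + (1 - (d : ℝ)) / p = (p - (d - 1)) / p := by field_simp; ring
      rw [this]; apply div_pos _ hp0; linarith
    have hγl : Tendsto γ atTop (𝓝 0) := tendsto_one_div_add_atTop_nhds_zero_nat
    have hδl : Tendsto (fun n => δ n ^ (1 + (1 - (d : ℝ)) / p)) atTop (𝓝 0) := by
      have := (Real.continuousAt_rpow_const 0 (1 + (1 - (d : ℝ)) / p) (Or.inr he.le)).tendsto.comp hker.lim
      rwa [Real.zero_rpow he.ne'] at this
    simpa using hγl.add (((hεlim.mul hγl).add (hδl.const_mul (A * Λ⁻¹))).const_mul (d * max D 0))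
  · intro n
    have hsm : ContDiff ℝ (⊤ : ℕ∞) (fun x => moll (ρ n) (w (k n)) (S n x)) :=
      (moll_contDiff (ρ n) (hw (k n)).1 (hw (k n)).2.1).comp (hSs n)
    have hsub : tsupport (fun x => moll (ρ n) (w (k n)) (S n x)) ⊆
        {x | ∀ z, z ∉ Ω → ε n ≤ dist x z} := by
      refine closure_minimal ?_ ?_
      · intro x hx
        have hex : ∃ y, (ρ n).normed volume (S n x - y) • w (k n) y ≠ 0 := by
          by_contra! hcon
          apply hx
          simp only [moll, hcon, integral_zero]
        obtain ⟨y, hy⟩ := hex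
        have hy1 : y ∈ Ω := by
          by_contra h
          exact hy (by rw [hwt _ _ h, smul_zero])
        have hy2 : ‖S n x - y‖ < ε n := by
          have h2 : S n x - y ∈ Function.support ((ρ n).normed volume) := fun h => hy (by rw [h, zero_smul])
          rw [(ρ n).support_normed_eq, mem_ball_zero_iff] at h2
          exact h2
        have hxR : ‖x‖ ≤ R + r := by
          have h1 := hR hy1
          rw [mem_closedBall_zero_iff] at h1
          have h2 := hSΛ n x
          have h3 := (hεΛ n).1
          have h4 : x = y + ((S n x - y) - (S n x - x)) := by abel
          rw [h4]
          have h5 := norm_add_le y ((S n x - y) - (S n x - x))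
          have h6 := norm_sub_le (S n x - y) (S n x - x)
          linarith
        exact hgeom (ε n) (hεpos n) (hεΛ n).1 x (T n x) (hTclose n x hxR) y hy1 hy2
      · simp only [ofPred_forall]
        exact isClosed_iInter fun z => isClosed_iInter fun _ =>
          isClosed_le continuous_const (continuous_id.dist continuous_const)
    have hsubΩ : tsupport (fun x => moll (ρ n) (w (k n)) (S n x)) ⊆ Ω := by
      intro x hx
      by_contra hxΩ
      have := hsub hx x hxΩ
      rw [dist_self] at this
      exact absurd this (not_le.2 (hεpos n))
    exact ⟨hsm, Metric.isCompact_of_isClosed_isBounded (isClosed_tsupport _) (hΩb.subset hsubΩ), hsubΩ⟩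
  · intro n x _
    rw [integral_bumpKer _ (hSm n)]
    refine (hk1 n (S n x)).trans ?_
    have h1 := (Real.rpow_nonneg (hδ0 n).le (1 + (1 - (d : ℝ)) / p))
    have := hεpos n
    have := hγ0 n
    exact le_add_of_nonneg_right (by positivity)
  · intro n x hx
    have hεn := hεpos n
    have hγn := hγ0 n
    have h1 := (Real.rpow_nonneg (hδ0 n).le (1 + (1 - (d : ℝ)) / p))
    have hβ0 : 0 ≤ d * max D 0 * (ε n * γ n + A * Λ⁻¹ * δ n ^ (1 + (1 - (d : ℝ)) / p)) := by positivity
    set P := ∫ y, Ω.indicator Dv y ∂(bumpKer (ρ n) (S n) x) with hP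
    set V := moll (ρ n) (w (k n)) with hV
    have hVs : ContDiff ℝ (⊤ : ℕ∞) V := moll_contDiff (ρ n) (hw (k n)).1 (hw (k n)).2.1
    have hQP : ‖smoothJac V (S n x) - P‖ ≤ γ n := by
      rw [hV, smoothJac_moll _ (hw (k n)).1 (hw (k n)).2.1, hP, integral_bumpKer _ (hSm n)]
      exact hk2 n (S n x)
    rw [pi_norm_le_iff_of_nonneg (by positivity)]
    intro i
    rw [pi_norm_le_iff_of_nonneg (by positivity)]
    intro j
    obtain ⟨a, ha1, ha2, ha3⟩ := hTder n x j
    have hcomp := smoothJac_comp (hVs.differentiable (by simp)) (hNs.differentiable (by simp))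
      ((hTs n).differentiable (by simp)) (ε n) x j a ha2 i
    show ‖smoothJac (fun x => V (x + ε n • N (T n x))) x i j - P i j‖ ≤ _
    rw [hcomp, add_sub_right_comm]
    refine (norm_add_le _ _).trans (add_le_add ?_ ?_)
    · exact ((norm_le_pi_norm ((smoothJac V (S n x) - P) i) j).trans
        (norm_le_pi_norm (smoothJac V (S n x) - P) i)).trans hQP
    · by_cases ha : a = 0
      · rw [ha]; simpa using hβ0
      · have hxR : ‖x‖ ≤ R := by simpa using hR hx
        have hTx : ‖fderiv ℝ N (T n x)‖ ≤ max D 0 := by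
          refine (hD _ ?_).trans (le_max_left _ _)
          rw [mem_closedBall_zero_iff]
          have h2 := hTclose n x (by linarith)
          have h3 := norm_add_le x (T n x - x)
          rw [add_sub_cancel] at h3
          linarith
        have hne : ‖fderiv ℝ N (T n x) (EuclideanSpace.single j 1)‖ ≤ max D 0 := by
          refine (ContinuousLinearMap.le_opNorm _ _).trans ?_
          rw [PiLp.norm_single, norm_one, mul_one]; exact hTx
        have hPb : ‖P‖ ≤ A * δ n ^ ((1 - (d : ℝ)) / p) := by
          refine hA n x ?_
          have h4 := ha3 ha (δ n) (by simp only [hδ]; nlinarith) (hεΛ n).2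
          rw [hμ, withDensity_apply _ measurableSet_closedBall] at h4
          rw [Real.rpow_one]; exact h4
        have hQb : ‖smoothJac V (S n x)‖ ≤ γ n + A * δ n ^ ((1 - (d : ℝ)) / p) := by
          have h5 := norm_add_le (smoothJac V (S n x) - P) P
          rw [sub_add_cancel] at h5
          linarith
        have h6 := fderiv_apply_le V (S n x) (fderiv ℝ N (T n x) (EuclideanSpace.single j 1)) i
        have h7 : ε n * δ n ^ ((1 - (d : ℝ)) / p) = Λ⁻¹ * δ n ^ (1 + (1 - (d : ℝ)) / p) := by
          rw [Real.rpow_add (hδ0 n), Real.rpow_one]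
          simp only [hδ]; field_simp
        have h8 := (Real.rpow_nonneg (hδ0 n).le ((1 - (d : ℝ)) / p))
        rw [norm_mul, norm_mul, Real.norm_of_nonneg hεn.le]
        calc ε n * ‖a‖ * ‖fderiv ℝ V (S n x) (fderiv ℝ N (T n x) (EuclideanSpace.single j 1)) i‖
            ≤ ε n * 1 * (d * max D 0 * (γ n + A * δ n ^ ((1 - (d : ℝ)) / p))) := by
              gcongr
              · exact ha1
              · refine h6.trans ?_
                gcongr
          _ = d * max D 0 * (ε n * γ n + A * (ε n * δ n ^ ((1 - (d : ℝ)) / p))) := by ring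
          _ = _ := by rw [h7]; ring

lemma approx_Lp {d : ℕ} {F : Type*} [NormedAddCommGroup F] [NormedSpace ℝ F] [CompleteSpace F]
    (Ω : Set (Euc d)) (hΩm : MeasurableSet Ω) (hΩb : Bornology.IsBounded Ω)
    {p : ℝ} (hp1 : 1 ≤ p)
    {κ : ℕ → ProbabilityTheory.Kernel (Euc d) (Euc d)} {δ : ℕ → ℝ} {C : ℝ≥0∞}
    (h : KerApprox κ δ C) (β : ℕ → ℝ) (hβ : Tendsto β atTop (𝓝 0))
    (f : ℕ → Euc d → F) (hf : ∀ n, Continuous (f n))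
    [SecondCountableTopologyEither (Euc d) F]
    (g : Euc d → F) (hg : MemLp g (ENNReal.ofReal p) (volume.restrict Ω))
    (hfg : ∀ n, ∀ x ∈ Ω, ‖f n x - ∫ y, Ω.indicator g y ∂(κ n x)‖ ≤ β n) :
    Tendsto (fun n => eLpNorm (f n - g) (ENNReal.ofReal p) (volume.restrict Ω)) atTop (𝓝 0) := by
  have hp0 : 0 < p := by linarith
  have h1p : (1 : ℝ≥0∞) ≤ ENNReal.ofReal p := by simpa using hp1
  haveI : IsFiniteMeasure (volume.restrict Ω) :=
    ⟨by rw [Measure.restrict_apply_univ]; exact hΩb.measure_lt_top⟩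
  have hgi : Integrable (Ω.indicator g) :=
    (integrable_indicator_iff hΩm).2 (hg.integrable h1p)
  have hgp : MemLp (Ω.indicator g) (ENNReal.ofReal p) := (memLp_indicator_iff_restrict hΩm).2 hg
  have h1 := h.tendsto_Lp hp1 hgi hgp
  set K : ℝ≥0∞ := (volume.restrict Ω) univ ^ (ENNReal.ofReal p).toReal⁻¹ with hK
  have hKfin : K ≠ ⊤ := ENNReal.rpow_ne_top_of_nonneg (by positivity) (measure_ne_top _ _)
  have h2 : Tendsto (fun n => K * ENNReal.ofReal (β n)) atTop (𝓝 0) := by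
    have := ENNReal.Tendsto.const_mul (a := K) (ENNReal.tendsto_ofReal hβ) (Or.inr hKfin)
    simpa using this
  have h3 := h2.add h1
  rw [add_zero] at h3
  refine tendsto_of_tendsto_of_tendsto_of_le_of_le tendsto_const_nhds h3 (fun _ => zero_le) ?_
  intro n
  have hXm : StronglyMeasurable (fun x => ∫ y, Ω.indicator g y ∂(κ n x)) := h.meas_int n hgi.1
  have e1 : eLpNorm (f n - g) (ENNReal.ofReal p) (volume.restrict Ω) =
      eLpNorm ((fun x => f n x - ∫ y, Ω.indicator g y ∂(κ n x)) +
        (fun x => (∫ y, Ω.indicator g y ∂(κ n x)) - Ω.indicator g x))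
        (ENNReal.ofReal p) (volume.restrict Ω) := by
    apply eLpNorm_congr_ae
    filter_upwards [ae_restrict_mem hΩm] with x hx
    simp [indicator_of_mem hx]
  show eLpNorm (f n - g) (ENNReal.ofReal p) (volume.restrict Ω) ≤ _
  rw [e1]
  refine (eLpNorm_add_le ?_ ?_ h1p).trans (add_le_add ?_ ?_)
  · exact ((hf n).aestronglyMeasurable.sub hXm.aestronglyMeasurable)
  · exact (hXm.aestronglyMeasurable.sub hgi.1).mono_measure Measure.restrict_le_self
  · apply eLpNorm_le_of_ae_bound
    filter_upwards [ae_restrict_mem hΩm] with x hx using hfg n x hx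
  · exact eLpNorm_mono_measure _ Measure.restrict_le_self

lemma smoothJac_smul {d m : ℕ} {φ : Euc d → Euc m} (hφ : ContDiff ℝ (⊤ : ℕ∞) φ) (s : ℝ) :
    smoothJac (s • φ) = s • smoothJac φ := by
  funext x
  ext i j
  have : fderiv ℝ (s • φ) x = s • fderiv ℝ φ x :=
    fderiv_const_smul (hφ.differentiable (by simp) x) s
  simp [smoothJac, this]

lemma IsCcSmooth.smul {d m : ℕ} {Ω : Set (Euc d)} {φ : Euc d → Euc m} (hφ : IsCcSmooth Ω φ)
    (s : ℝ) : IsCcSmooth Ω (s • φ) := by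
  have hsub : tsupport (s • φ) ⊆ tsupport φ := by
    apply closure_mono
    intro x hx hx'
    apply hx
    simp [hx']
  refine ⟨contDiff_const.smul hφ.1, ?_, hsub.trans hφ.2.2⟩
  exact hφ.2.1.of_isClosed_subset (isClosed_tsupport _) hsub

lemma smul_dist_le {d : ℕ} {F : Type*} [NormedAddCommGroup F] [NormedSpace ℝ F]
    {μ : Measure (Euc d)} {p : ℝ≥0∞} (h1p : 1 ≤ p) {f g : Euc d → F}
    (hf : AEStronglyMeasurable f μ) (hg : AEStronglyMeasurable g μ) {s : ℝ} (hs0 : 0 < s)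
    (hs1 : s < 1) :
    eLpNorm (s • f - g) p μ ≤ eLpNorm (f - g) p μ + ENNReal.ofReal (1 - s) * eLpNorm g p μ := by
  have e : s • f - g = s • (f - g) + (-(1 - s)) • g := by
    module
  rw [e]
  refine (eLpNorm_add_le ((hf.sub hg).const_smul s) (hg.const_smul _) h1p).trans
    (add_le_add ?_ ?_)
  · rw [eLpNorm_const_smul]
    refine mul_le_of_le_one_left' ?_
    rw [Real.enorm_eq_ofReal hs0.le]
    simpa using hs1.le
  · rw [eLpNorm_const_smul, enorm_neg, Real.enorm_eq_ofReal (by linarith)]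

lemma finite_case {m d : ℕ} (Ω : Set (Euc d)) (hΩo : IsOpen Ω) (hΩb : Bornology.IsBounded Ω)
    (hΩl : HasLipschitzBoundary Ω)
    (p : ℝ) (hp1 : 1 ≤ p) (hpd : (d : ℝ) - 1 < p)
    (W : Euc d → Mat m d → ℝ≥0∞) (hWfin : ∀ x ξ, W x ξ < ⊤)
    (hWm : Measurable (Function.uncurry W))
    (hWc : ∀ᵐ x ∂volume.restrict Ω, ConvexENNReal (W x))
    (hst : StabilityEstimate Ω p W)
    (hWint : ∀ ξ : Mat m d, (∫⁻ x in Ω, W x ξ) < ⊤)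
    (Dg : Euc d → Mat m d) (hDg : MemLp Dg ⊤ (volume.restrict Ω))
    (v : Euc d → Euc m) (Dv : Euc d → Mat m d)
    (hv : MemW1p0 Ω (ENNReal.ofReal p) v Dv)
    (hF : ∫⁻ x in Ω, W x (Dg x + Dv x) ≠ ⊤) :
    ∃ φ : ℕ → Euc d → Euc m, (∀ n, IsCcSmooth Ω (φ n)) ∧
          TendstoW1p Ω (ENNReal.ofReal p) φ (fun n => smoothJac (φ n)) v Dv ∧
          Tendsto (fun n => ∫⁻ x in Ω, W x (Dg x + smoothJac (φ n) x)) atTop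
            (𝓝 (∫⁻ x in Ω, W x (Dg x + Dv x))) := by
  have hp0 : 0 < p := by linarith
  have hΩm := hΩo.measurableSet
  have h1p : (1 : ℝ≥0∞) ≤ ENNReal.ofReal p := by simpa using hp1
  haveI : IsFiniteMeasure (volume.restrict Ω) :=
    ⟨by rw [Measure.restrict_apply_univ]; exact hΩb.measure_lt_top⟩
  have hvp : MemLp v (ENNReal.ofReal p) (volume.restrict Ω) := hv.1.1
  have hDv : MemLp Dv (ENNReal.ofReal p) (volume.restrict Ω) := hv.1.2.1
  obtain ⟨κ, δ, C, β, φ, hK, hβ, hφ, hφ1, hφ2⟩ :=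
    exists_approx Ω hΩo hΩb hΩl p hp1 hpd v Dv hv
  have hφc : ∀ n, Continuous (φ n) := fun n => (hφ n).1.continuous
  have hJc : ∀ n, Continuous (smoothJac (φ n)) := fun n => smoothJac_continuous (hφ n).1
  have L1 := approx_Lp Ω hΩm hΩb hp1 hK β hβ φ hφc v hvp hφ1
  have L2 := approx_Lp Ω hΩm hΩb hp1 hK β hβ (fun n => smoothJac (φ n)) hJc Dv hDv hφ2
  set Z : Set (ℝ≥0∞ × ℝ≥0∞ × ℝ≥0∞) := {z | ∃ φ : Euc d → Euc m, IsCcSmooth Ω φ ∧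
    eLpNorm (φ - v) (ENNReal.ofReal p) (volume.restrict Ω) ≤ z.1 ∧
    eLpNorm (smoothJac φ - Dv) (ENNReal.ofReal p) (volume.restrict Ω) ≤ z.2.1 ∧
    ∫⁻ x in Ω, W x (Dg x + smoothJac φ x) = z.2.2} with hZ
  have key : ∀ s : ℝ, 0 < s → s < 1 →
      ((ENNReal.ofReal (1 - s) * eLpNorm v (ENNReal.ofReal p) (volume.restrict Ω),
        ENNReal.ofReal (1 - s) * eLpNorm Dv (ENNReal.ofReal p) (volume.restrict Ω),
        ∫⁻ x in Ω, W x (Dg x + s • Dv x)) : ℝ≥0∞ × ℝ≥0∞ × ℝ≥0∞) ∈ closure Z := by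
    intro s hs0 hs1
    have L3 := energy_tendsto Ω hΩo hΩb p hp1 W hWfin hWm hWc hst hWint Dg Dv hDg hDv hF hK
      (fun n => smoothJac (φ n)) (fun n => (hJc n).measurable) β hβ hφ2 s hs0 hs1
    have L1' := L1.add_const
      (ENNReal.ofReal (1 - s) * eLpNorm v (ENNReal.ofReal p) (volume.restrict Ω))
    have L2' := L2.add_const
      (ENNReal.ofReal (1 - s) * eLpNorm Dv (ENNReal.ofReal p) (volume.restrict Ω))
    rw [zero_add] at L1' L2'
    refine mem_closure_of_tendsto (L1'.prodMk_nhds (L2'.prodMk_nhds L3)) (Eventually.of_forall ?_)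
    intro n
    refine ⟨s • φ n, (hφ n).smul s, ?_, ?_, ?_⟩
    · exact smul_dist_le h1p (hφc n).aestronglyMeasurable hvp.1 hs0 hs1
    · rw [smoothJac_smul (hφ n).1]
      exact smul_dist_le h1p (hJc n).aestronglyMeasurable hDv.1 hs0 hs1
    · rw [smoothJac_smul (hφ n).1]
      rfl
  have hWcont : ∀ᵐ x ∂volume.restrict Ω, Continuous (W x) := by
    filter_upwards [hWc] with x hx using hx.continuous (hWfin x)
  -- let `s → 1`
  set s : ℕ → ℝ := fun k => 1 - 1 / ((k : ℝ) + 2) with hs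
  have hs0 : ∀ k, 0 < s k := by
    intro k
    have : 1 / ((k : ℝ) + 2) < 1 := by
      rw [div_lt_one (by positivity)]
      have : (0 : ℝ) ≤ k := by positivity
      linarith
    simp only [hs]; linarith
  have hs1 : ∀ k, s k < 1 := by
    intro k
    have : 0 < 1 / ((k : ℝ) + 2) := by positivity
    simp only [hs]; linarith
  have hsl : Tendsto (fun k => 1 - s k) atTop (𝓝 0) := by
    have h1 : Tendsto (fun k : ℕ => 1 / ((k : ℝ) + 2)) atTop (𝓝 0) := by
      apply Tendsto.div_atTop tendsto_const_nhds
      exact tendsto_atTop_add_const_right _ _ tendsto_natCast_atTop_atTop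
    simpa [hs] using h1
  have hsl' : Tendsto s atTop (𝓝 1) := by
    have := (tendsto_const_nhds (x := (1 : ℝ))).sub hsl
    simpa using this
  have hsm : ∀ A : ℝ≥0∞, A ≠ ⊤ → Tendsto (fun k => ENNReal.ofReal (1 - s k) * A) atTop (𝓝 0) := by
    intro A hA
    have := ENNReal.Tendsto.mul_const (b := A) (ENNReal.tendsto_ofReal hsl) (Or.inr hA)
    simpa using this
  have hE : Tendsto (fun k => ∫⁻ x in Ω, W x (Dg x + s k • Dv x)) atTop
      (𝓝 (∫⁻ x in Ω, W x (Dg x + Dv x))) := by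
    obtain ⟨Γ, hΓm, hΓf, hΓ⟩ := exists_bound_fun Ω W hWm hWfin hWint
      (eLpNorm Dg ⊤ (volume.restrict Ω)).toReal
    have hDgb : ∀ᵐ x ∂volume.restrict Ω, ‖Dg x‖ ≤ (eLpNorm Dg ⊤ (volume.restrict Ω)).toReal := by
      have h1 := ae_le_eLpNormEssSup (f := Dg) (μ := volume.restrict Ω)
      filter_upwards [h1] with x hx
      rw [← eLpNorm_exponent_top] at hx
      have := ENNReal.toReal_mono hDg.2.ne hx
      simpa using this
    have hWme : ∀ X : Euc d → Mat m d, AEMeasurable X (volume.restrict Ω) →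
        AEMeasurable (fun x => W x (X x)) (volume.restrict Ω) := fun X hX =>
      hWm.comp_aemeasurable (aemeasurable_id.prodMk hX)
    have hDgm := hDg.1.aemeasurable
    have hDvm := hDv.1.aemeasurable
    refine dct_gen (e := fun _ _ => 0) (G := fun x => W x (Dg x + Dv x) + Γ x) ?_ ?_ ?_ ?_ ?_ ?_ ?_
    · intro k
      exact hWme _ (hDgm.add (hDvm.const_smul (s k)))
    · exact (hWme _ (hDgm.add hDvm)).add hΓm.aemeasurable
    · rw [lintegral_add_right _ hΓm]
      exact ENNReal.add_ne_top.2 ⟨hF, hΓf.ne⟩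
    · simp
    · simp
    · refine Eventually.of_forall fun k => ?_
      filter_upwards [hWc, hDgb] with x hx hb
      have h1 := hx (Dg x + Dv x) (Dg x) (s k) (hs0 k).le (hs1 k).le
      have e : s k • (Dg x + Dv x) + (1 - s k) • Dg x = Dg x + s k • Dv x := by module
      rw [e] at h1
      have h2 : ENNReal.ofReal (s k) ≤ 1 := by simpa using (hs1 k).le
      have h3 : ENNReal.ofReal (1 - s k) ≤ 1 := by simpa using (hs0 k).le
      rw [add_zero]
      exact h1.trans (add_le_add (mul_le_of_le_one_left' h2)
        ((mul_le_of_le_one_left' h3).trans (hΓ x hx _ hb)))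
    · filter_upwards [hWcont] with x hx
      have h1 : Tendsto (fun k => Dg x + s k • Dv x) atTop (𝓝 (Dg x + Dv x)) := by
        have := (hsl'.smul_const (Dv x)).const_add (Dg x)
        simpa using this
      exact (hx.tendsto _).comp h1
  have hcl : ((0, 0, ∫⁻ x in Ω, W x (Dg x + Dv x)) : ℝ≥0∞ × ℝ≥0∞ × ℝ≥0∞) ∈ closure Z := by
    refine isClosed_closure.mem_of_tendsto
      ((hsm _ hvp.2.ne).prodMk_nhds ((hsm _ hDv.2.ne).prodMk_nhds hE)) (Eventually.of_forall ?_)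
    intro k
    exact key (s k) (hs0 k) (hs1 k)
  obtain ⟨z, hzZ, hzl⟩ := mem_closure_iff_seq_limit.1 hcl
  choose ψ hψ1 hψ2 hψ3 hψ4 using hzZ
  have t1 : Tendsto (fun n => (z n).1) atTop (𝓝 0) := (continuous_fst.tendsto _).comp hzl
  have t2 : Tendsto (fun n => (z n).2.1) atTop (𝓝 0) :=
    ((continuous_fst.comp continuous_snd).tendsto _).comp hzl
  have t3 : Tendsto (fun n => (z n).2.2) atTop (𝓝 (∫⁻ x in Ω, W x (Dg x + Dv x))) :=
    ((continuous_snd.comp continuous_snd).tendsto _).comp hzl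
  refine ⟨ψ, hψ1, ⟨?_, ?_⟩, ?_⟩
  · exact tendsto_of_tendsto_of_tendsto_of_le_of_le tendsto_const_nhds t1 (fun _ => zero_le) hψ2
  · exact tendsto_of_tendsto_of_tendsto_of_le_of_le tendsto_const_nhds t2 (fun _ => zero_le) hψ3
  · exact t3.congr fun n => (hψ4 n).symm

lemma infinite_case {m d : ℕ} (Ω : Set (Euc d))
    (p : ℝ) (hp1 : 1 ≤ p)
    (W : Euc d → Mat m d → ℝ≥0∞) (hWfin : ∀ x ξ, W x ξ < ⊤)
    (hWm : Measurable (Function.uncurry W))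
    (hWc : ∀ᵐ x ∂volume.restrict Ω, ConvexENNReal (W x))
    (Dg : Euc d → Mat m d) (hDg : MemLp Dg ⊤ (volume.restrict Ω))
    (v : Euc d → Euc m) (Dv : Euc d → Mat m d)
    (hv : MemW1p0 Ω (ENNReal.ofReal p) v Dv)
    (hF : ∫⁻ x in Ω, W x (Dg x + Dv x) = ⊤) :
    ∃ φ : ℕ → Euc d → Euc m, (∀ n, IsCcSmooth Ω (φ n)) ∧
          TendstoW1p Ω (ENNReal.ofReal p) φ (fun n => smoothJac (φ n)) v Dv ∧
          Tendsto (fun n => ∫⁻ x in Ω, W x (Dg x + smoothJac (φ n) x)) atTop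
            (𝓝 (∫⁻ x in Ω, W x (Dg x + Dv x))) := by
  have hp0 : 0 < p := by linarith
  obtain ⟨⟨hvp, hDv, _⟩, w, hw, t1, t2⟩ := hv
  have hJc : ∀ n, Continuous (smoothJac (w n)) := fun n => smoothJac_continuous (hw n).1
  have tm := tendstoInMeasure_of_tendsto_eLpNorm (p := ENNReal.ofReal p)
    (by simpa using hp0) (fun n => (hJc n).aestronglyMeasurable) hDv.1 t2
  obtain ⟨ns, hns, hae⟩ := tm.exists_seq_tendsto_ae
  have hnt := hns.tendsto_atTop
  have hWme : ∀ X : Euc d → Mat m d, AEMeasurable X (volume.restrict Ω) →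
      AEMeasurable (fun x => W x (X x)) (volume.restrict Ω) := fun X hX =>
    hWm.comp_aemeasurable (aemeasurable_id.prodMk hX)
  refine ⟨fun n => w (ns n), fun n => hw _, ⟨t1.comp hnt, t2.comp hnt⟩, ?_⟩
  have hfat := lintegral_liminf_le' (μ := volume.restrict Ω) (u := (atTop : Filter ℕ))
    (f := fun n x => W x (Dg x + smoothJac (w (ns n)) x))
    (fun n => hWme _ (hDg.1.aemeasurable.add (hJc _).measurable.aemeasurable))
  have heq : ∫⁻ x in Ω, liminf (fun n => W x (Dg x + smoothJac (w (ns n)) x)) atTop =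
      ∫⁻ x in Ω, W x (Dg x + Dv x) := by
    apply lintegral_congr_ae
    filter_upwards [hWc, hae] with x hx hx2
    have h1 := hx.continuous (hWfin x)
    exact ((h1.tendsto _).comp (hx2.const_add (Dg x))).liminf_eq
  rw [heq, hF] at hfat
  rw [hF]
  exact tendsto_of_le_liminf_of_limsup_le hfat le_top

lemma IsCcSmooth.memW1p0 {m d : ℕ} {Ω : Set (Euc d)} (p : ℝ≥0∞)
    {φ : Euc d → Euc m} (hφ : IsCcSmooth Ω φ) :
    MemW1p0 Ω p φ (smoothJac φ) := by
  have hJc : Continuous (smoothJac φ) := smoothJac_continuous hφ.1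
  refine ⟨⟨?_, ?_, ?_⟩, fun _ => φ, fun _ => hφ, ?_, ?_⟩
  · exact (hφ.1.continuous.memLp_of_hasCompactSupport hφ.2.1).restrict _
  · exact (hJc.memLp_of_hasCompactSupport (smoothJac_hcs hφ.2.1)).restrict _
  · intro ψ hψ hψc hψs i j
    have hψd : Differentiable ℝ ψ := hψ.differentiable (by simp)
    have hφd : Differentiable ℝ φ := hφ.1.differentiable (by simp)
    have hφi : ∀ x, HasFDerivAt (fun y => φ y i)
        ((EuclideanSpace.proj i : Euc m →L[ℝ] ℝ).comp (fderiv ℝ φ x)) x := fun x =>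
      (EuclideanSpace.proj i : Euc m →L[ℝ] ℝ).hasFDerivAt.comp x (hφd x).hasFDerivAt
    have hfd : ∀ x, fderiv ℝ (fun y => φ y i) x (EuclideanSpace.single j 1) = smoothJac φ x i j := by
      intro x
      rw [(hφi x).fderiv]
      rfl
    have cψ' : Continuous (fun x => fderiv ℝ ψ x (EuclideanSpace.single j 1)) :=
      (hψ.continuous_fderiv (by simp)).clm_apply continuous_const
    have cφ : Continuous (fun x => φ x i) :=
      (EuclideanSpace.proj i : Euc m →L[ℝ] ℝ).continuous.comp hφ.1.continuous
    have cJ : Continuous (fun x => smoothJac φ x i j) :=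
      (continuous_apply j).comp ((continuous_apply i).comp hJc)
    have hz : ∀ x ∉ Ω, ψ x = 0 := fun x hx => image_eq_zero_of_notMem_tsupport fun h => hx (hψs h)
    have hz' : ∀ x ∉ Ω, φ x = 0 := fun x hx =>
      image_eq_zero_of_notMem_tsupport fun h => hx (hφ.2.2 h)
    rw [setIntegral_eq_integral_of_forall_compl_eq_zero (fun x hx => by simp [hz' x hx]),
      setIntegral_eq_integral_of_forall_compl_eq_zero (fun x hx => by simp [hz x hx])]
    have hφic : HasCompactSupport (fun x => φ x i) :=
      hφ.2.1.comp_left (g := fun y : Euc m => y i) rfl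
    have := integral_mul_fderiv_eq_neg_fderiv_mul_of_integrable (μ := (volume : Measure (Euc d)))
      (f := fun x => φ x i) (g := ψ) (v := EuclideanSpace.single j (1 : ℝ)) ?_ ?_ ?_
      (fun x _ => (hφi x).differentiableAt) (fun x _ => hψd x)
    · simpa only [hfd] using this
    · simp only [hfd]
      exact (cJ.mul hψ.continuous).integrable_of_hasCompactSupport (hψc.mul_left)
    · exact (cφ.mul cψ').integrable_of_hasCompactSupport (hφic.mul_right)
    · exact (cφ.mul hψ.continuous).integrable_of_hasCompactSupport (hφic.mul_right)
  · simp
  · simp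

/-- **Corollary 2.5.** Let `Ω ⊂ ℝ^d` be a bounded open set with Lipschitz
boundary, `p > d−1`, and let `W` satisfy Assumption 1 with finite values and
`x ↦ W(x,ξ) ∈ L¹(Ω)` for every `ξ`. Let `g ∈ W^{1,∞}(Ω)^m`. Then every
`u = g + v ∈ g + W_0^{1,p}(Ω)^m` can be approximated by `u_n = g + φ_n ∈ g + C_c^∞(Ω)^m`
strongly in `W^{1,p}` with convergence of the energies; in particular the infima of the
energy over `g + W_0^{1,p}(Ω)^m` and over `g + C_c^∞(Ω)^m` coincide. -/
theorem no_lavrentiev_gap_locally_bounded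
    (d m : ℕ) (Ω : Set (Euc d)) (hΩo : IsOpen Ω) (hΩb : Bornology.IsBounded Ω)
    (hΩl : HasLipschitzBoundary Ω)
    (p : ℝ) (hp1 : 1 ≤ p) (hpd : (d : ℝ) - 1 < p)
    (W : Euc d → Mat m d → ℝ≥0∞) (hWfin : ∀ x ξ, W x ξ < ⊤)
    (hW : Assumption1 Ω p W)
    (hWint : ∀ ξ : Mat m d, (∫⁻ x in Ω, W x ξ) < ⊤)
    (g : Euc d → Euc m) (Dg : Euc d → Mat m d)
    (hg : MemW1p Ω ⊤ g Dg) :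
    (∀ (v : Euc d → Euc m) (Dv : Euc d → Mat m d),
        MemW1p0 Ω (ENNReal.ofReal p) v Dv →
        ∃ φ : ℕ → Euc d → Euc m, (∀ n, IsCcSmooth Ω (φ n)) ∧
          TendstoW1p Ω (ENNReal.ofReal p) φ (fun n => smoothJac (φ n)) v Dv ∧
          Tendsto (fun n => ∫⁻ x in Ω, W x (Dg x + smoothJac (φ n) x)) atTop
            (𝓝 (∫⁻ x in Ω, W x (Dg x + Dv x)))) ∧
    sInf {e : ℝ≥0∞ | ∃ (v : Euc d → Euc m) (Dv : Euc d → Mat m d),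
        MemW1p0 Ω (ENNReal.ofReal p) v Dv ∧ e = ∫⁻ x in Ω, W x (Dg x + Dv x)} =
      sInf {e : ℝ≥0∞ | ∃ φ : Euc d → Euc m, IsCcSmooth Ω φ ∧
        e = ∫⁻ x in Ω, W x (Dg x + smoothJac φ x)} := by
  obtain ⟨hWm, hWcl, _, _, hst⟩ := hW
  have hWc : ∀ᵐ x ∂volume.restrict Ω, ConvexENNReal (W x) := hWcl.mono fun _ h => h.1
  have hDg : MemLp Dg ⊤ (volume.restrict Ω) := hg.2.1
  have main : ∀ (v : Euc d → Euc m) (Dv : Euc d → Mat m d),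
        MemW1p0 Ω (ENNReal.ofReal p) v Dv →
        ∃ φ : ℕ → Euc d → Euc m, (∀ n, IsCcSmooth Ω (φ n)) ∧
          TendstoW1p Ω (ENNReal.ofReal p) φ (fun n => smoothJac (φ n)) v Dv ∧
          Tendsto (fun n => ∫⁻ x in Ω, W x (Dg x + smoothJac (φ n) x)) atTop
            (𝓝 (∫⁻ x in Ω, W x (Dg x + Dv x))) := by
    intro v Dv hv
    by_cases hF : ∫⁻ x in Ω, W x (Dg x + Dv x) = ⊤
    · exact infinite_case Ω p hp1 W hWfin hWm hWc Dg hDg v Dv hv hF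
    · exact finite_case Ω hΩo hΩb hΩl p hp1 hpd W hWfin hWm hWc hst hWint Dg hDg v Dv hv hF
  refine ⟨main, le_antisymm ?_ ?_⟩
  · apply sInf_le_sInf
    rintro e ⟨φ, hφ, rfl⟩
    exact ⟨φ, smoothJac φ, hφ.memW1p0 _, rfl⟩
  · apply le_sInf
    rintro e ⟨v, Dv, hv, rfl⟩
    obtain ⟨φ, hφ, -, hlim⟩ := main v Dv hv
    exact ge_of_tendsto' hlim fun n => sInf_le ⟨φ n, hφ n, rfl⟩

end
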